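/- arXiv:1707.02003 — 7 statements merged into one kernel-verified Lean document; each statement's English description precedes it below -/
import Mathlib

section
/- Let q be an odd prime power with q > 9 and q ≡ 1 (mod 4), and let Q be the set of nonzero squares in GF(q). Consider the action of PGL_2(q) on the projective line GF(q) ∪ {∞} by fractional linear transformations x ↦ (ax+b)/(cx+d) with ad - bc ≠ 0. Then the setwise stabiliser of Q in PGL_2(q) equals {x ↦ a·x : a ∈ Q} ∪ {x ↦ b/x : b ∈ Q}; that is, such a fractional linear transformation maps Q onto Q if and only if it is of the form x ↦ a·x with a ∈ Q or x ↦ b/x with b ∈ Q. -/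
/-!
Let `m = (q - 1) / 2`, so that `Q` is the set of roots of `X ^ m - 1`. If `x ↦ (ax+b)/(cx+d)` maps
`Q` into `Q`, then `(ax+b)^m = (cx+d)^m` on `Q`. Since `x ^ m = 1` there, this is the vanishing on
`Q` of a polynomial of degree less than `m = |Q|`, and comparing coefficients
(`coeff_eq_zero_of_vanish_on_squares`) gives
`(m choose i) * (a^i b^(m-i) - c^i d^(m-i)) = 0` for `0 < i < m`.

There are consecutive indices `i, i + 1` whose binomial coefficients are both nonzero in `F`
(`exists_consecutive_choose_ne_zero`). Since `2m = -1` and `8 (m choose 2) = 3` in `F`, in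
characteristic other than `3` they can be taken to be `1, 2`. In characteristic `3` they are
`3, 4`: `q > 9` forces `9 ∣ q`, hence `m ≡ 4 (mod 9)` has last two ternary digits `1, 1`, and
Lucas' theorem applies.

If `a` or `b` vanishes, the identity at `i` makes `d` or `c` vanish too, so the map is `x ↦ t / x`
or `x ↦ s x`. If neither does, the identities at `i` and `i + 1` give `ad = bc`
(`det_eq_zero_of_consecutive`), a contradiction.
-/

/-- A polynomial of degree below `m = (q - 1) / 2` that vanishes on the nonzero squares is zero:
after the substitution `x = y ^ 2` it has degree below `q - 1` and vanishes at all `y ≠ 0`. -/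
lemma coeff_eq_zero_of_vanish_on_squares {F : Type*} [Field F] [Fintype F] [DecidableEq F]
    (m : ℕ) (hm : 2 * m + 1 = Fintype.card F) (w : ℕ → F)
    (h : ∀ x : F, x ≠ 0 → IsSquare x → ∑ i ∈ Finset.range m, w i * x ^ i = 0) :
    ∀ i < m, w i = 0 := by
  intro i hi
  set P : Polynomial F := ∑ i ∈ Finset.range m, Polynomial.C (w i) * Polynomial.X ^ i with hP
  have hdeg : P.natDegree ≤ m - 1 := by
    refine Polynomial.natDegree_sum_le_of_forall_le _ _ fun j hj => ?_
    refine (Polynomial.natDegree_C_mul_X_pow_le _ _).trans ?_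
    have := Finset.mem_range.mp hj
    omega
  have hexp : Polynomial.expand F 2 P = 0 := by
    refine Polynomial.eq_zero_of_natDegree_lt_card_of_eval_eq_zero' _
      (Finset.univ.erase (0 : F)) (fun y hy => ?_) ?_
    · have hy0 : y ≠ 0 := Finset.ne_of_mem_erase hy
      rw [Polynomial.expand_eval, hP, Polynomial.eval_finsetSum]
      simpa using h (y ^ 2) (pow_ne_zero 2 hy0) (IsSquare.sq y)
    · rw [Polynomial.natDegree_expand, Finset.card_erase_of_mem (Finset.mem_univ _),
        Finset.card_univ]
      omega
  have hP0 : P = 0 := (Polynomial.expand_eq_zero (by norm_num)).mp hexp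
  have hc : P.coeff i = w i := by
    rw [hP, Polynomial.finsetSum_coeff]
    simp [hi]
  rw [← hc, hP0, Polynomial.coeff_zero]

/-- The coefficient identities forced by `(ax+b)^m = (cx+d)^m` on the nonzero squares. -/
lemma choose_mul_sub_eq_zero {F : Type*} [Field F] [Fintype F] [DecidableEq F]
    (m : ℕ) (hm : 2 * m + 1 = Fintype.card F) (a b c d : F)
    (h : ∀ x : F, x ≠ 0 → IsSquare x → x ^ m = 1 ∧ (a * x + b) ^ m = (c * x + d) ^ m)
    (i : ℕ) (hi0 : 0 < i) (him : i < m) :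
    (m.choose i : F) * (a ^ i * b ^ (m - i) - c ^ i * d ^ (m - i)) = 0 := by
  -- Replacing `x ^ m` by `1` moves the leading coefficient `a ^ m - c ^ m` into the constant term.
  have key := coeff_eq_zero_of_vanish_on_squares m hm
    (fun j => (m.choose j : F) * (a ^ j * b ^ (m - j) - c ^ j * d ^ (m - j))
      + if j = 0 then a ^ m - c ^ m else 0) ?_ i him
  · simpa [hi0.ne'] using key
  · intro x hx hsq
    obtain ⟨hx1, hx2⟩ := h x hx hsq
    rw [add_pow, add_pow, Finset.sum_range_succ, Finset.sum_range_succ] at hx2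
    simp only [mul_pow, hx1, Nat.sub_self, pow_zero, Nat.choose_self, Nat.cast_one, mul_one] at hx2
    simp only [add_mul, Finset.sum_add_distrib, ite_mul, zero_mul]
    rw [Finset.sum_ite_eq' (Finset.range m) 0 (fun j => (a ^ m - c ^ m) * x ^ j),
      if_pos (Finset.mem_range.mpr (by omega))]
    have e : ∑ j ∈ Finset.range m,
        (m.choose j : F) * (a ^ j * b ^ (m - j) - c ^ j * d ^ (m - j)) * x ^ j
        = ∑ j ∈ Finset.range m, a ^ j * x ^ j * b ^ (m - j) * (m.choose j : F)
          - ∑ j ∈ Finset.range m, c ^ j * x ^ j * d ^ (m - j) * (m.choose j : F) := by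
      rw [← Finset.sum_sub_distrib]
      exact Finset.sum_congr rfl fun j _ => by ring
    rw [e]
    linear_combination hx2

/-- Dividing the identities for the exponents `i` and `i + 1` yields `a / b = c / d`. -/
lemma det_eq_zero_of_consecutive {F : Type*} [Field F] (m i : ℕ) (him : i < m) (a b c d : F)
    (ha : a ≠ 0) (hb : b ≠ 0)
    (h1 : a ^ i * b ^ (m - i) = c ^ i * d ^ (m - i))
    (h2 : a ^ (i + 1) * b ^ (m - (i + 1)) = c ^ (i + 1) * d ^ (m - (i + 1))) :
    a * d - b * c = 0 := by
  obtain ⟨k, rfl⟩ : ∃ k, m = i + 1 + k := ⟨m - (i + 1), by omega⟩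
  rw [show i + 1 + k - i = k + 1 by omega] at h1
  rw [show i + 1 + k - (i + 1) = k by omega] at h2
  have hne : a ^ i * b ^ k ≠ 0 := mul_ne_zero (pow_ne_zero _ ha) (pow_ne_zero _ hb)
  refine (mul_eq_zero.mp ?_).resolve_left hne
  linear_combination d * h2 - c * h1

/-- There are consecutive indices below `m = (q - 1) / 2` at which `m choose i` is nonzero
in `F`. -/
lemma exists_consecutive_choose_ne_zero {F : Type*} [Field F] [Fintype F]
    (m : ℕ) (hm : 2 * m + 1 = Fintype.card F) (h9 : 9 < Fintype.card F) :
    ∃ i, 0 < i ∧ i + 1 < m ∧ (m.choose i : F) ≠ 0 ∧ (m.choose (i + 1) : F) ≠ 0 := by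
  have h2m : (2 : F) * m + 1 = 0 := by
    have := FiniteField.cast_card_eq_zero F
    rw [← hm] at this
    exact_mod_cast this
  by_cases h3 : (3 : F) = 0
  · have hchar : CharP F 3 :=
      (CharP.charP_iff_prime_eq_zero Nat.prime_three).mpr (by exact_mod_cast h3)
    have : Fact (Nat.Prime 3) := ⟨Nat.prime_three⟩
    obtain ⟨n, -, hn⟩ := FiniteField.card F 3
    have hn3 : 2 ≤ (n : ℕ) := by
      by_contra hlt
      have : (n : ℕ) = 1 := by have := n.pos; omega
      rw [this] at hn
      omega
    obtain ⟨k, hk⟩ : 9 ∣ Fintype.card F := by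
      rw [hn]
      exact pow_dvd_pow 3 hn3
    have hm9 : m % 9 = 4 := by omega
    have ne_of_mod : ∀ j : ℕ, j % 3 = 1 → (j : F) ≠ 0 := by
      intro j hj h0
      rw [CharP.cast_eq_zero_iff F 3] at h0
      omega
    have l3 := Choose.choose_modEq_choose_mod_mul_choose_div_nat (n := m) (k := 3) (p := 3)
    have l4 := Choose.choose_modEq_choose_mod_mul_choose_div_nat (n := m) (k := 4) (p := 3)
    have hmod : m % 3 = 1 := by omega
    have hdiv : m / 3 % 3 = 1 := by omega
    simp only [hmod, Nat.ModEq, Nat.reduceMod, Nat.reduceDiv, Nat.choose_zero_right,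
      Nat.choose_self, Nat.choose_one_right, one_mul, hdiv] at l3 l4
    exact ⟨3, by norm_num, by omega, ne_of_mod _ (by omega), ne_of_mod _ (by omega)⟩
  · refine ⟨1, one_pos, by omega, ?_, ?_⟩
    · rw [Nat.choose_one_right]
      intro h0
      rw [h0] at h2m
      simp at h2m
    · intro h0
      have e : ((m * (m - 1) : ℕ) : F) = 2 * (m.choose (1 + 1) : F) := by
        have t := Nat.choose_two_right m
        have t2 := Nat.div_mul_cancel (Nat.even_mul_pred_self m).two_dvd
        rw [← t2, ← t]
        push_cast
        ring
      rw [h0, Nat.cast_mul, Nat.cast_sub (by omega)] at e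
      apply h3
      push_cast at e
      linear_combination 4 * e - (2 * (m : F) - 3) * h2m

/-- A fractional linear transformation mapping nonzero squares to nonzero squares is diagonal or
antidiagonal. -/
lemma diag_or_antidiag {F : Type*} [Field F] [Fintype F] [DecidableEq F]
    (hodd : Odd (Fintype.card F)) (h9 : 9 < Fintype.card F)
    (a b c d : F) (hdet : a * d - b * c ≠ 0)
    (h : ∀ x : F, x ≠ 0 → IsSquare x → c * x + d ≠ 0 ∧ (a * x + b) / (c * x + d) ≠ 0 ∧
      IsSquare ((a * x + b) / (c * x + d))) :
    (b = 0 ∧ c = 0) ∨ (a = 0 ∧ d = 0) := by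
  obtain ⟨m, hm⟩ := hodd
  have hchar : ringChar F ≠ 2 := by
    intro h2
    have := FiniteField.even_card_of_char_two h2
    omega
  have hhalf : Fintype.card F / 2 = m := by omega
  have hpow : ∀ x : F, x ≠ 0 → IsSquare x →
      x ^ m = 1 ∧ (a * x + b) ^ m = (c * x + d) ^ m := by
    intro x hx hsq
    obtain ⟨h0, h1, h2⟩ := h x hx hsq
    rw [FiniteField.isSquare_iff hchar h1, hhalf, div_pow,
      div_eq_one_iff_eq (pow_ne_zero _ h0)] at h2
    rw [FiniteField.isSquare_iff hchar hx, hhalf] at hsq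
    exact ⟨hsq, h2⟩
  have hco : ∀ i, 0 < i → i < m → (m.choose i : F) ≠ 0 →
      a ^ i * b ^ (m - i) = c ^ i * d ^ (m - i) := fun i hi0 him hne =>
    sub_eq_zero.mp ((mul_eq_zero.mp
      (choose_mul_sub_eq_zero m hm.symm a b c d hpow i hi0 him)).resolve_left hne)
  obtain ⟨i, hi0, him, hn1, hn2⟩ := exists_consecutive_choose_ne_zero m hm.symm h9
  have e1 := hco i hi0 (by omega) hn1
  have e2 := hco (i + 1) (by omega) him hn2
  have hi : i ≠ 0 := hi0.ne'
  have hmi : m - i ≠ 0 := by omega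
  by_cases ha : a = 0
  · subst ha
    have hc : c ≠ 0 := by rintro rfl; simp at hdet
    simp [hi, hc, hmi] at e1
    exact Or.inr ⟨rfl, e1⟩
  by_cases hb : b = 0
  · subst hb
    have hd : d ≠ 0 := by rintro rfl; simp at hdet
    simp [hi, hd, hmi] at e1
    exact Or.inl ⟨rfl, e1⟩
  exact absurd (det_eq_zero_of_consecutive m i (by omega) a b c d ha hb e1 e2) hdet


/-- The fractional linear transformation `x ↦ (ax+b)/(cx+d)` on the projective
line `GF(q) ∪ {∞}`, with `∞` modelled by `none : Option F`, following the
conventions `a/0 = ∞` for `a ≠ 0` and `(∞·a + b)/(∞·c + d) = a/c`. -/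
def mobiusMap {F : Type*} [Field F] [DecidableEq F] (a b c d : F) :
    Option F → Option F
  | none => if c = 0 then none else some (a / c)
  | some u => if c * u + d = 0 then none else some ((a * u + b) / (c * u + d))

/-- For an odd prime power `q > 9` with `q ≡ 1 (mod 4)` and `Q` the set of
nonzero squares of `GF(q)`, the setwise stabiliser of `Q` in `PGL₂(q)` acting on
the projective line is `{x ↦ a·x : a ∈ Q} ∪ {x ↦ b/x : b ∈ Q}`: a fractional
linear transformation maps `Q` onto `Q` iff it is of the form `x ↦ s·x` with
`s ∈ Q` or `x ↦ t/x` with `t ∈ Q`. -/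
theorem pgl2_stabiliser_of_nonzero_squares (F : Type*) [Field F] [Fintype F] [DecidableEq F]
    (q : ℕ) (hq : q = Fintype.card F) (hodd : Odd q) (h9 : 9 < q) (h1 : q % 4 = 1)
    (Q : Set F) (hQ : Q = {x : F | x ≠ 0 ∧ IsSquare x})
    (a b c d : F) (hdet : a * d - b * c ≠ 0) :
    mobiusMap a b c d '' (Option.some '' Q) = Option.some '' Q ↔
      ((∃ s ∈ Q, mobiusMap a b c d = mobiusMap s 0 0 1) ∨
       (∃ t ∈ Q, mobiusMap a b c d = mobiusMap 0 t 1 0)) := by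
  subst hQ hq
  constructor
  · intro himg
    have h : ∀ x : F, x ≠ 0 → IsSquare x → c * x + d ≠ 0 ∧ (a * x + b) / (c * x + d) ≠ 0 ∧
        IsSquare ((a * x + b) / (c * x + d)) := by
      intro x hx hsq
      have hx' : mobiusMap a b c d (some x) ∈ Option.some '' {x : F | x ≠ 0 ∧ IsSquare x} :=
        himg ▸ Set.mem_image_of_mem _ (Set.mem_image_of_mem _ ⟨hx, hsq⟩)
      obtain ⟨y, hy, hxy⟩ := hx'
      by_cases h0 : c * x + d = 0
      · simp [mobiusMap, h0] at hxy
      · simp only [mobiusMap, if_neg h0, Option.some.injEq] at hxy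
        exact ⟨h0, hxy ▸ hy⟩
    -- The parameter `s` or `t` is the image of `1`.
    have hone := (h 1 one_ne_zero IsSquare.one).2
    rcases diag_or_antidiag hodd h9 a b c d hdet h with ⟨rfl, rfl⟩ | ⟨rfl, rfl⟩
    · have hd : d ≠ 0 := by rintro rfl; simp at hdet
      refine Or.inl ⟨a / d, by simpa using hone, ?_⟩
      funext x
      cases x with
      | none => simp [mobiusMap]
      | some u => simp [mobiusMap, hd]; field_simp
    · have hc : c ≠ 0 := by rintro rfl; simp at hdet
      refine Or.inr ⟨b / c, by simpa using hone, ?_⟩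
      funext x
      cases x with
      | none => simp [mobiusMap, hc]
      | some u =>
        by_cases hu : u = 0
        · simp [mobiusMap, hu]
        · simp [mobiusMap, hu, hc]; field_simp
  · rintro (⟨s, ⟨hs0, hs⟩, he⟩ | ⟨t, ⟨ht0, ht⟩, he⟩)
    · rw [he]
      ext y
      constructor
      · rintro ⟨_, ⟨x, ⟨hx0, hx⟩, rfl⟩, rfl⟩
        exact ⟨s * x, ⟨mul_ne_zero hs0 hx0, hs.mul hx⟩, by simp [mobiusMap]⟩
      · rintro ⟨x, ⟨hx0, hx⟩, rfl⟩
        refine ⟨_, ⟨x / s, ⟨div_ne_zero hx0 hs0, hx.div hs⟩, rfl⟩, ?_⟩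
        simp [mobiusMap]
        field_simp
    · rw [he]
      ext y
      constructor
      · rintro ⟨_, ⟨x, ⟨hx0, hx⟩, rfl⟩, rfl⟩
        exact ⟨t / x, ⟨div_ne_zero ht0 hx0, ht.div hx⟩, by simp [mobiusMap, hx0]⟩
      · rintro ⟨x, ⟨hx0, hx⟩, rfl⟩
        refine ⟨_, ⟨t / x, ⟨div_ne_zero ht0 hx0, ht.div hx⟩, rfl⟩, ?_⟩
        simp [mobiusMap, hx0, ht0]
end

section
/- Let q be an odd prime power with q > 9, let Q be the set of nonzero squares in GF(q), and let τ ∈ GF(q)*. Set B_τ = Q △ (Q + τ), the symmetric difference of Q and Q + τ. Then the setwise stabiliser of B_τ in GA_1(q) is the trivial group {id} if q ≡ 3 (mod 4), and is the two-element group {id, x ↦ τ - x} if q ≡ 1 (mod 4). -/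
/-!
Write `S` for the set of nonzero squares, `q = 2m + 1` and `f = X (X - τ)`. By Euler's criterion a
point `x ∉ {0, τ}` lies in `B` exactly when `f(x) ^ m = -1`. Hence if `x ↦ a x + b` preserves `B`,
then `f ^ m` and `g ^ m` agree on the field off the roots of `f` and `g`, where
`g = (X - u) (X - v)` with `u, v = -b / a, (τ - b) / a` the preimages of `0` and `τ`.
The core of the proof is that this forces `{0, τ} = {u, v}` as soon as `q > 12`
(`root_eq_of_pow_eq`), which leaves only the identity and `x ↦ τ - x`.

This would follow from the Hasse–Weil bound, but an elementary auxiliary polynomial argument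
suffices. The polynomial `f g (f ^ m - g ^ m)` vanishes on the whole field, so it equals
`(X ^ q - X) h`, and comparing degrees gives `deg h ≤ 2`. Eliminating `f ^ m` and `g ^ m` by means of
`(f ^ m) ^ 2 f = f ^ q` and `(g ^ m) ^ 2 g = g ^ q` yields
`(f g² f ^ q + f² g g ^ q - h² (X ^ q - X)²)² = 4 f³ g³ f ^ q g ^ q`.
Let `r` be a root of `f`. Modulo `(X - r) ^ q` one has `f ^ q ≡ 0`, `g ^ q ≡ g(r)` and
`X ^ q - X ≡ r - X`, so `(X - r) ^ q` divides the square of `A = g(r) f² g - h² (X - r)²`.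
As `A²` has degree at most `12 < q`, it is zero, and `g(r) f² g = h² (X - r)²`. If `g(r) ≠ 0`, the
simple root `u` of `g` has odd multiplicity on the left and even multiplicity on the right, which
is absurd; so `r` is a root of `g`.

The remaining field, with `q = 11`, is handled by evaluation in `ZMod 11`. Finally, `x ↦ τ - x`
preserves `B` when `-1` is a square, and otherwise exchanges the points `0` and `τ`, exactly one of
which lies in `B`.
-/

open Polynomial in
/-- A polynomial vanishing on the whole finite field is divisible by `X ^ q - X`. -/
lemma X_pow_card_sub_X_dvd {F : Type*} [Field F] [Fintype F] (E : F[X])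
    (hE : ∀ x, E.eval x = 0) : (X ^ Fintype.card F - X : F[X]) ∣ E := by
  classical
  by_cases h0 : E = 0
  · simp [h0]
  have hcard : 1 < Fintype.card F := Fintype.one_lt_card
  have hroots := FiniteField.roots_X_pow_card_sub_X F
  have hdeg := FiniteField.X_pow_card_sub_X_natDegree_eq F hcard
  have hm : (X ^ Fintype.card F - X : F[X]).Monic :=
    monic_X_pow_sub (by rw [degree_X]; exact_mod_cast hcard)
  have h := prod_multiset_X_sub_C_of_monic_of_roots_card_eq hm
    (by rw [hroots, hdeg]; rfl)
  rw [← h, Multiset.prod_X_sub_C_dvd_iff_le_roots h0, hroots,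
    Multiset.le_iff_subset Finset.univ.nodup]
  intro x _
  exact (mem_roots h0).2 (hE x)

open Polynomial in
/-- The elementary substitute for the Hasse–Weil bound: if two monic quadratics, each with distinct
roots, take values with the same quadratic character off their roots, every root of the first is a
root of the second. -/
lemma root_eq_of_pow_eq {F : Type*} [Field F] [Fintype F] (m : ℕ)
    (hm : Fintype.card F = 2 * m + 1) (h12 : 12 < Fintype.card F) (r s u v : F) (huv : u ≠ v)
    (H : ∀ x, x ≠ r → x ≠ s → x ≠ u → x ≠ v →
      ((x - r) * (x - s)) ^ m = ((x - u) * (x - v)) ^ m) :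
    r = u ∨ r = v := by
  classical
  by_contra hne
  push Not at hne
  obtain ⟨hru, hrv⟩ := hne
  set q := Fintype.card F with hq
  obtain ⟨f, hf⟩ : ∃ f : F[X], f = (X - C r) * (X - C s) := ⟨_, rfl⟩
  obtain ⟨g, hg⟩ : ∃ g : F[X], g = (X - C u) * (X - C v) := ⟨_, rfl⟩
  have hfm : f.Monic := hf ▸ (monic_X_sub_C r).mul (monic_X_sub_C s)
  have hgm : g.Monic := hg ▸ (monic_X_sub_C u).mul (monic_X_sub_C v)
  have hfd : f.natDegree = 2 := by
    rw [hf, (monic_X_sub_C r).natDegree_mul (monic_X_sub_C s)]; simp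
  have hgd : g.natDegree = 2 := by
    rw [hg, (monic_X_sub_C u).natDegree_mul (monic_X_sub_C v)]; simp
  have hvan : ∀ x, (f * g * (f ^ m - g ^ m)).eval x = 0 := by
    intro x
    simp only [eval_mul, eval_sub, eval_pow]
    have ef : f.eval x = (x - r) * (x - s) := by simp [hf]
    have eg : g.eval x = (x - u) * (x - v) := by simp [hg]
    rw [ef, eg]
    by_cases h1 : x = r
    · simp [h1]
    by_cases h2 : x = s
    · simp [h2]
    by_cases h3 : x = u
    · simp [h3]
    by_cases h4 : x = v
    · simp [h4]
    rw [H x h1 h2 h3 h4]; ring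
  obtain ⟨h, hh⟩ := X_pow_card_sub_X_dvd _ hvan
  rw [← hq] at hh
  have hXd : (X ^ q - X : F[X]).natDegree = q :=
    FiniteField.X_pow_card_sub_X_natDegree_eq F (by omega)
  have hX0 : (X ^ q - X : F[X]) ≠ 0 := by
    intro h0; rw [h0] at hXd; simp at hXd; omega
  have hhd : h.natDegree ≤ 2 := by
    by_cases h0 : h = 0
    · simp [h0]
    have hE : f * g * (f ^ m - g ^ m) ≠ 0 := by rw [hh]; exact mul_ne_zero hX0 h0
    have hyz : f ^ m - g ^ m ≠ 0 := right_ne_zero_of_mul hE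
    -- Both powers are monic of degree `2 * m`, so the leading terms cancel.
    have hlt : (f ^ m - g ^ m).natDegree < 2 * m := by
      have hd1 : (f ^ m).natDegree = 2 * m := by rw [hfm.natDegree_pow, hfd]; ring
      have hd2 : (g ^ m).natDegree = 2 * m := by rw [hgm.natDegree_pow, hgd]; ring
      have := degree_sub_lt_left (p := f ^ m) (q := g ^ m)
        (by rw [degree_eq_natDegree (hfm.pow m).ne_zero,
              degree_eq_natDegree (hgm.pow m).ne_zero, hd1, hd2])
        (hfm.pow m).ne_zero
        (by rw [(hfm.pow m).leadingCoeff, (hgm.pow m).leadingCoeff])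
      rw [← hd1]
      exact natDegree_lt_natDegree hyz this
    have h1 : (f * g * (f ^ m - g ^ m)).natDegree = q + h.natDegree := by
      rw [hh, natDegree_mul hX0 h0, hXd]
    rw [natDegree_mul (mul_ne_zero hfm.ne_zero hgm.ne_zero) hyz,
      natDegree_mul hfm.ne_zero hgm.ne_zero, hfd, hgd] at h1
    omega
  obtain ⟨c, hc⟩ : ∃ c, c = g.eval r := ⟨_, rfl⟩
  have hc0 : c ≠ 0 := by
    rw [hc, hg]; simp [sub_ne_zero, hru, hrv]
  obtain ⟨A, hA⟩ : ∃ A : F[X], A = f ^ 2 * g * C c - h ^ 2 * (X - C r) ^ 2 := ⟨_, rfl⟩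
  have hfq : f ^ q = (X - C r) ^ q * (X - C s) ^ q := by rw [hf, mul_pow]
  have hcard : ∀ p : F[X], expand F q p = p ^ q := FiniteField.expand_card
  obtain ⟨k, hk⟩ : ∃ k, g ^ q = C c + (X - C r) ^ q * k := by
    have h1 : (X - C r) ^ q ∣ (g - C c) ^ q :=
      pow_dvd_pow_of_dvd (hc ▸ X_sub_C_dvd_sub_C_eval) q
    rw [← hcard (g - C c), map_sub, expand_C, hcard] at h1
    obtain ⟨k, hk⟩ := h1
    exact ⟨k, by rw [← hk]; ring⟩
  have hXr : (X ^ q - X : F[X]) = (X - C r) ^ q - (X - C r) := by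
    rw [← hcard (X - C r), map_sub, expand_C, expand_X]; ring
  have hid : (f * g ^ 2 * f ^ q + f ^ 2 * g * g ^ q - h ^ 2 * (X ^ q - X) ^ 2) ^ 2
      = 4 * f ^ 3 * g ^ 3 * f ^ q * g ^ q := by
    have e1 : h ^ 2 * (X ^ q - X) ^ 2 = (f * g * (f ^ m - g ^ m)) ^ 2 := by rw [hh]; ring
    rw [e1, hm]; ring
  have hdvd : (X - C r) ^ q ∣ A ^ 2 := by
    rw [hfq, hk, hXr] at hid
    generalize (X - C r) ^ q = D at *
    generalize (X - C s) ^ q = D' at *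
    have e : f * g ^ 2 * (D * D') + f ^ 2 * g * (C c + D * k) - h ^ 2 * (D - (X - C r)) ^ 2
        = A + D * (f * g ^ 2 * D' + f ^ 2 * g * k - h ^ 2 * (D - 2 * (X - C r))) := by
      rw [hA]; ring
    rw [e] at hid
    generalize (f * g ^ 2 * D' + f ^ 2 * g * k - h ^ 2 * (D - 2 * (X - C r))) = w at *
    exact ⟨4 * f ^ 3 * g ^ 3 * D' * (C c + D * k) - 2 * A * w - D * w ^ 2, by
      linear_combination hid⟩
  have hAd : A.natDegree ≤ 6 := by
    rw [hA]
    refine (natDegree_sub_le _ _).trans (max_le ?_ ?_)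
    · refine (natDegree_mul_C_le _ _).trans (natDegree_mul_le.trans ?_)
      have := natDegree_pow_le (p := f) (n := 2)
      omega
    · refine natDegree_mul_le.trans ?_
      have h1 := natDegree_pow_le (p := h) (n := 2)
      have h2 := natDegree_pow_le (p := X - C r) (n := 2)
      rw [natDegree_X_sub_C] at h2
      omega
  have hA2 : A ^ 2 = 0 := by
    refine eq_zero_of_dvd_of_natDegree_lt hdvd ?_
    rw [natDegree_pow, natDegree_pow, natDegree_X_sub_C]
    omega
  have hA0 : f ^ 2 * g * C c = h ^ 2 * (X - C r) ^ 2 := by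
    have := pow_eq_zero_iff (two_ne_zero) |>.1 hA2
    rw [hA] at this
    exact sub_eq_zero.1 this
  -- Compare the parities of the multiplicity of the root `u`.
  have hL : f * f * ((X - C u) * (X - C v)) * C c = (h * (X - C r)) * (h * (X - C r)) := by
    rw [← hg]; linear_combination hA0
  have hL0 : f * f * ((X - C u) * (X - C v)) * C c ≠ 0 := by
    rw [← hg]
    exact mul_ne_zero (mul_ne_zero (mul_ne_zero hfm.ne_zero hfm.ne_zero) hgm.ne_zero)
      (C_ne_zero.2 hc0)
  have hmul := congrArg (rootMultiplicity u) hL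
  have hR0 := hL ▸ hL0
  rw [rootMultiplicity_mul hL0, rootMultiplicity_mul (left_ne_zero_of_mul hL0),
    rootMultiplicity_mul (left_ne_zero_of_mul (left_ne_zero_of_mul hL0)),
    rootMultiplicity_mul (right_ne_zero_of_mul (left_ne_zero_of_mul hL0)),
    rootMultiplicity_mul hR0, rootMultiplicity_C, rootMultiplicity_X_sub_C,
    rootMultiplicity_X_sub_C, if_pos rfl, if_neg huv] at hmul
  omega

set_option maxRecDepth 100000 in
/-- The case `q = 11`; `x ^ 5 = 1` says that `x` is a nonzero square. -/
lemma stabiliser_zmod_eleven : ∀ t a b : ZMod 11, t ≠ 0 → a ≠ 0 →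
    (∀ x : ZMod 11, ((((a * x + b) ^ 5 = 1) ↔ ((a * x + b - t) ^ 5 = 1)) ↔
      ((x ^ 5 = 1) ↔ ((x - t) ^ 5 = 1)))) → a = 1 ∧ b = 0 := by
  decide

/-- The stabiliser of `B` lies in `{id, x ↦ τ - x}`. Membership of `x` in `B` is encoded as the failure of `x ^ m = 1 ↔ (x - τ) ^ m = 1`. -/
lemma stabiliser_le {F : Type*} [Field F] [Fintype F] (m : ℕ)
    (hm : Fintype.card F = 2 * m + 1) (h9 : 9 < Fintype.card F) (τ a b : F) (hτ : τ ≠ 0)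
    (ha : a ≠ 0)
    (H : ∀ x : F, ((((a * x + b) ^ m = 1) ↔ ((a * x + b - τ) ^ m = 1)) ↔
      ((x ^ m = 1) ↔ ((x - τ) ^ m = 1)))) :
    (a = 1 ∧ b = 0) ∨ (a = -1 ∧ b = τ) := by
  by_cases h11 : Fintype.card F = 11
  · left
    have hm5 : m = 5 := by omega
    subst hm5
    let e : ZMod 11 ≃+* F := ZMod.ringEquivOfPrime F (by norm_num) h11
    have key := stabiliser_zmod_eleven (e.symm τ) (e.symm a) (e.symm b) (by simpa using hτ)
      (by simpa using ha) (by
        intro x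
        have hx := H (e x)
        have t1 : ∀ y : F, (e.symm y) ^ 5 = 1 ↔ y ^ 5 = 1 := by
          intro y
          rw [← map_pow, EmbeddingLike.map_eq_one_iff]
        rw [← t1, ← t1, ← t1, ← t1] at hx
        simpa using hx)
    simpa using key
  have h12 : 12 < Fintype.card F := by omega
  have hchar : ringChar F ≠ 2 := fun h => by
    have := FiniteField.even_card_of_char_two h
    omega
  have hm2 : Fintype.card F / 2 = m := by omega
  have dich : ∀ {x : F}, x ≠ 0 → x ^ m = 1 ∨ x ^ m = -1 := fun {x} hx => by
    have := FiniteField.pow_dichotomy hchar hx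
    rwa [hm2] at this
  have hne : (-1 : F) ≠ 1 := Ring.neg_one_ne_one_of_char_ne_two hchar
  have ha2 : (a ^ 2) ^ m = 1 := by
    rw [pow_right_comm]
    rcases dich ha with h | h <;> rw [h] <;> ring
  have huv : -b / a ≠ (τ - b) / a := by
    intro h
    rw [div_left_inj' ha] at h
    apply hτ
    linear_combination -h
  have hpow : ∀ x, x ≠ 0 → x ≠ τ → x ≠ -b / a → x ≠ (τ - b) / a →
      ((x - 0) * (x - τ)) ^ m = ((x - -b / a) * (x - (τ - b) / a)) ^ m := by
    intro x h1 h2 h3 h4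
    have h3' : a * x + b ≠ 0 := fun h => h3 (by field_simp; linear_combination h)
    have h4' : a * x + b - τ ≠ 0 := fun h => h4 (by field_simp; linear_combination h)
    have e : (a * x + b) * (a * x + b - τ)
        = a ^ 2 * ((x - -b / a) * (x - (τ - b) / a)) := by field_simp; ring
    have e2 : ((x - -b / a) * (x - (τ - b) / a)) ^ m
        = (a * x + b) ^ m * (a * x + b - τ) ^ m := by
      rw [← mul_pow (a * x + b), e, mul_pow (a ^ 2), ha2, one_mul]
    rw [e2, sub_zero, mul_pow]
    have hx := H x
    rcases dich h1 with i1 | i1 <;> rcases dich (sub_ne_zero.2 h2) with i2 | i2 <;>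
      rcases dich h3' with i3 | i3 <;> rcases dich h4' with i4 | i4 <;>
      rw [i1, i2, i3, i4] at hx ⊢ <;> simp [hne] at hx ⊢
  have k0 := root_eq_of_pow_eq m hm h12 0 τ _ _ huv hpow
  have k1 := root_eq_of_pow_eq m hm h12 τ 0 _ _ huv (fun x i1 i2 i3 i4 => by
    rw [mul_comm]; exact hpow x i2 i1 i3 i4)
  rw [eq_div_iff ha, eq_div_iff ha] at k0 k1
  rcases k0 with k0 | k0
  · have hb : b = 0 := by linear_combination k0
    left
    refine ⟨?_, hb⟩
    subst hb
    rcases k1 with k1 | k1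
    · exact absurd (by simpa using k1) (not_or.2 ⟨hτ, ha⟩)
    · apply mul_left_cancel₀ hτ
      linear_combination k1
  · have hb : b = τ := by linear_combination k0
    right
    refine ⟨?_, hb⟩
    subst hb
    rcases k1 with k1 | k1
    · apply mul_left_cancel₀ hτ
      linear_combination k1
    · exact absurd (by simpa using k1) (not_or.2 ⟨hτ, ha⟩)

/-- For an odd prime power `q > 9`, `Q` the set of nonzero squares of `GF(q)` and
`τ ∈ GF(q)*`, the setwise stabiliser of `B_τ = Q △ (Q + τ)` in `GA₁(q)` is the
trivial group `{id}` when `q ≡ 3 (mod 4)` and the two-element group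
`{id, x ↦ τ - x}` when `q ≡ 1 (mod 4)`. -/
theorem ga1_stabiliser_of_Q_symmDiff_Q_add_tau (F : Type*) [Field F] [Fintype F]
    (q : ℕ) (hq : q = Fintype.card F) (hodd : Odd q) (h9 : 9 < q)
    (τ : F) (hτ : τ ≠ 0)
    (Q : Set F) (hQ : Q = {x : F | x ≠ 0 ∧ IsSquare x})
    (B : Set F) (hB : B = symmDiff Q {x : F | ∃ y ∈ Q, x = y + τ})
    (a b : F) (ha : a ≠ 0) :
    (q % 4 = 3 → ((fun x => a * x + b) '' B = B ↔ (a = 1 ∧ b = 0))) ∧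
    (q % 4 = 1 → ((fun x => a * x + b) '' B = B ↔
      ((a = 1 ∧ b = 0) ∨ (a = -1 ∧ b = τ)))) := by
  obtain ⟨m, hm⟩ := hodd
  have hcard : Fintype.card F = 2 * m + 1 := hq ▸ hm
  have hchar : ringChar F ≠ 2 := fun h => by
    have := FiniteField.even_card_of_char_two h
    omega
  have hne : (-1 : F) ≠ 1 := Ring.neg_one_ne_one_of_char_ne_two hchar
  have hm0 : m ≠ 0 := by omega
  have hmemQ : ∀ x, x ∈ Q ↔ x ^ m = 1 := by
    intro x
    rw [hQ, Set.mem_ofPred_eq]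
    by_cases h0 : x = 0
    · simp [h0, hm0]
    · rw [FiniteField.isSquare_iff hchar h0, show Fintype.card F / 2 = m by omega]
      simp [h0]
  have hmemB : ∀ x, x ∈ B ↔ ¬ (x ^ m = 1 ↔ (x - τ) ^ m = 1) := by
    intro x
    have h1 : x ∈ {x : F | ∃ y ∈ Q, x = y + τ} ↔ (x - τ) ^ m = 1 := by
      rw [← hmemQ]
      constructor
      · rintro ⟨y, hy, rfl⟩
        simpa using hy
      · intro h
        exact ⟨_, h, by ring⟩
    rw [hB, Set.mem_symmDiff, h1, hmemQ]
    tauto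
  have hinj : Function.Injective (fun x : F => a * x + b) := fun x y h => by
    simpa [ha] using h
  have himg : (fun x => a * x + b) '' B = B → ∀ x, a * x + b ∈ B ↔ x ∈ B := by
    intro h x
    have := hinj.mem_set_image (s := B) (a := x)
    rwa [h] at this
  have hfwd : (fun x => a * x + b) '' B = B → (a = 1 ∧ b = 0) ∨ (a = -1 ∧ b = τ) := by
    intro h
    refine stabiliser_le m hcard (by omega) τ a b hτ ha (fun x => ?_)
    have := himg h x
    rw [hmemB, hmemB] at this
    exact not_iff_not.1 this
  have hid : a = 1 ∧ b = 0 → (fun x => a * x + b) '' B = B := by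
    rintro ⟨rfl, rfl⟩
    simp
  refine ⟨fun h3 => ⟨fun h => ?_, hid⟩, fun h1 => ⟨hfwd, ?_⟩⟩
  · rcases hfwd h with h' | ⟨rfl, rfl⟩
    · exact h'
    -- Here `-1` is a nonsquare, so exactly one of `0` and `τ` lies in `B`.
    exfalso
    have hodd : Odd m := by rw [Nat.odd_iff]; omega
    have h0 := himg h 0
    rw [hmemB, hmemB] at h0
    simp only [mul_zero, zero_add, sub_self, zero_sub, zero_pow hm0, hodd.neg_pow] at h0
    have hd := FiniteField.pow_dichotomy hchar hτ
    rw [show Fintype.card F / 2 = m by omega] at hd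
    rcases hd with hd | hd <;> rw [hd] at h0 <;> simp [hne] at h0
  · rintro (h | ⟨rfl, rfl⟩)
    · exact hid h
    have heven : Even m := by rw [Nat.even_iff]; omega
    have hmem : ∀ x, x ∈ B → -1 * x + b ∈ B := by
      intro x hx
      rw [hmemB] at hx ⊢
      have e1 : -1 * x + b = -(x - b) := by ring
      have e2 : -(x - b) - b = -x := by ring
      rw [e1, e2, heven.neg_pow, heven.neg_pow]
      tauto
    apply Set.Subset.antisymm
    · rintro _ ⟨x, hx, rfl⟩
      exact hmem x hx
    · intro x hx
      exact ⟨-1 * x + b, hmem x hx, by ring⟩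
end

section
/- Let q be a power of an odd prime with q > 9, let Q be the set of nonzero squares in GF(q), let N be the set of nonsquares in GF(q)*, and let τ ∈ GF(q)*. Set B_τ = Q △ (Q + τ), the symmetric difference. Then the orbit {π(B_τ) : π ∈ GA_1(q)} is the block set of a 2-(q, k, λ) design on GF(q), where k = (q+1)/2 if q ≡ 3 (mod 4), k = (q+3)/2 if q ≡ 1 (mod 4) and τ ∈ Q, k = (q-1)/2 if q ≡ 1 (mod 4) and τ ∈ N; and λ = k(k-1) if q ≡ 3 (mod 4), λ = k(k-1)/2 if q ≡ 1 (mod 4). -/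
/-!
The group `GA₁(q)` acts sharply 2-transitively on `F`, so if `B` has `k` points and its stabilizer
has order `s`, every pair of points lies in `k (k - 1) / s` blocks of the orbit (`count_blocks`).
What has to be shown is the value of `k` and that the stabilizer of `B` is trivial for
`q ≡ 3 (mod 4)` and is `{x ↦ x, x ↦ τ - x}` for `q ≡ 1 (mod 4)`.

Let `χ` be the quadratic character. Away from `0` and `τ`, membership of `x` in `B` means
`χ (x (x - τ)) = -1` (`indicator_block`); summing over `x` and using the Jacobi sum of `χ` with
itself gives `k` (`card_block`).

For the stabilizer (`stabilizer_three`, `stabilizer_one`), put `τ = 2c`, `m = (q - 1) / 2`, and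
cast to `F`, where `χ (x (x - τ)) = ((x - c)² - c²)^m`. Expanding this power computes the power
sums `∑_{x ∈ B} (x - c)^i` for `i < q - 1` (`moment_block`): they are explicit multiples of `c^i`
whose coefficients involve `binom(m, i/2)`, i.e. `binom(-1/2, i/2)` in `F` (`choose_vals`).
An affine map preserving `B` preserves these power sums after an affine substitution, and the
resulting equations for `i ≤ 11` determine the map. The characteristics `3`, `5` and `7`, in which
some of the low power sums vanish, need the higher ones; the condition `q > 9` ensures that these
satisfy `i < q - 1`.
-/

namespace DesignProof

open Finset

variable {F : Type*} [Field F] [Fintype F]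

/-! ### Power sums and binomial coefficients in a finite field -/

theorem sum_pow_univ (n : ℕ) (hn : n < 2 * (Fintype.card F - 1)) :
    ∑ y : F, y ^ n = if n = Fintype.card F - 1 then -1 else 0 := by
  classical
  have h1 : 1 < Fintype.card F := Fintype.one_lt_card
  split_ifs with h
  · subst h
    have : ∀ y : F, y ^ (Fintype.card F - 1) = 1 - if y = 0 then 1 else 0 := by
      intro y
      split_ifs with hy
      · subst hy; rw [zero_pow (by omega)]; ring
      · rw [FiniteField.pow_card_sub_one_eq_one y hy]; ring
    simp [this]
  · by_cases hlt : n < Fintype.card F - 1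
    · exact FiniteField.sum_pow_lt_card_sub_one F n hlt
    · have hnd : ¬ (Fintype.card F - 1 ∣ n) := by
        rintro ⟨r, rfl⟩
        have : r < 2 := by
          by_contra hr
          push Not at hr
          nlinarith
        interval_cases r <;> simp_all
      have h0 : n ≠ 0 := by rintro rfl; simp at hnd
      have hu := FiniteField.sum_pow_units F n
      rw [if_neg hnd] at hu
      have key := Fintype.sum_equiv (unitsEquivNeZero (G₀ := F)) (fun x => (x : F) ^ n)
        (fun y => (y : F) ^ n) (fun _ => rfl)
      have k2 : ∑ y : {y : F // y ≠ 0}, (y : F) ^ n = ∑ y ∈ univ.filter (· ≠ 0), y ^ n :=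
        (Finset.sum_subtype _ (by simp) _).symm
      rw [hu, k2, Finset.sum_filter] at key
      rw [key]
      refine Finset.sum_congr rfl fun y _ => ?_
      split_ifs with hy
      · rfl
      · rw [not_not.1 hy, zero_pow h0]

/-- Vandermonde's identity for `binom(2m + 1, n) = binom(q, n)`, which is `0` in `F`
for `0 < n < q`. -/
theorem choose_rec (m n : ℕ) (hm : Fintype.card F = 2 * m + 1) (hn0 : n ≠ 0)
    (hn : n < Fintype.card F) :
    ∑ ij ∈ antidiagonal n, (m.choose ij.1 : F) * ((m + 1).choose ij.2 : F) = 0 := by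
  have h := Nat.add_choose_eq m (m + 1) n
  obtain ⟨p, hp, e, hc⟩ := FiniteField.card' F
  have : Fact p.Prime := ⟨hc.1⟩
  have hd : p ∣ (m + (m + 1)).choose n := by
    rw [show m + (m + 1) = p ^ (e : ℕ) by omega]
    exact hc.1.dvd_choose_pow hn0 (by omega)
  rw [← CharP.cast_eq_zero_iff F p, h] at hd
  exact_mod_cast hd

/-- The values `binom(m, j) = binom(-1/2, j)` in `F` for `m = (q - 1) / 2` and `j ≤ 5`. The
recursion of `choose_rec` divides only by `2`, so they hold in characteristics `3` and `5` too. -/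
theorem choose_vals (m : ℕ) (hm : Fintype.card F = 2 * m + 1) (hq : 5 < Fintype.card F) :
    2 * (m : F) = -1 ∧ 8 * (m.choose 2 : F) = 3 ∧ 16 * (m.choose 3 : F) = -5 ∧
    128 * (m.choose 4 : F) = 35 ∧ 256 * (m.choose 5 : F) = -63 := by
  have r (n) (h0 : n ≠ 0) (hn : n < 6) := choose_rec (F := F) m n hm h0 (by omega)
  have h1 := r 1 (by norm_num) (by norm_num)
  have h2 := r 2 (by norm_num) (by norm_num)
  have h3 := r 3 (by norm_num) (by norm_num)
  have h4 := r 4 (by norm_num) (by norm_num)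
  have h5 := r 5 (by norm_num) (by norm_num)
  have s (j : ℕ) : ((m + 1).choose (j + 1) : F) = m.choose j + m.choose (j + 1) := by
    rw [Nat.choose_succ_succ]; push_cast; ring
  simp only [Finset.Nat.sum_antidiagonal_eq_sum_range_succ_mk, Finset.sum_range_succ,
    Finset.sum_range_zero, Nat.reduceSub] at h1 h2 h3 h4 h5
  simp only [s 0, s 1, s 2, s 3, s 4, Nat.choose_zero_right, Nat.cast_one] at h1 h2 h3 h4 h5
  simp only [zero_add, Nat.choose_one_right] at h1 h2 h3 h4 h5
  generalize (m : F) = x1 at *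
  generalize (m.choose 2 : F) = x2 at *
  generalize (m.choose 3 : F) = x3 at *
  generalize (m.choose 4 : F) = x4 at *
  generalize (m.choose 5 : F) = x5 at *
  have e1 : 2 * x1 = -1 := by linear_combination h1
  have e2 : 8 * x2 = 3 := by linear_combination 4 * h2 - (2 * x1 + 3) * e1
  have e3 : 16 * x3 = -5 := by
    linear_combination 8 * h3 - (8 * x2 + 4 * x1 - 2) * e1 - e2
  have e4 : 128 * x4 = 35 := by
    linear_combination 64 * h4 - (64 * x3 + 64 * x2) * e1 - (8 * x2 - 5) * e2 - 4 * e3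
  have e5 : 256 * x5 = -63 := by
    linear_combination 128 * h5 - (128 * x4 + 128 * x3) * e1 - (32 * x3 + 16 * x2 + 6) * e2
      + 2 * e3 - e4
  exact ⟨e1, e2, e3, e4, e5⟩

/-- After expanding `(y² - c²)^m`, only the exponent `q - 1 = 2m` of `y` contributes. -/
theorem sum_pow_mul_pow (m i : ℕ) (hm : Fintype.card F = 2 * m + 1) (hm0 : 0 < m)
    (hi : i < 2 * m) (c : F) :
    ∑ y : F, y ^ i * (y ^ 2 - c ^ 2) ^ m =
      if Even i then -((m.choose (i / 2) : F) * (-c ^ 2) ^ (i / 2)) else 0 := by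
  have e : ∀ y : F, y ^ i * (y ^ 2 - c ^ 2) ^ m =
      ∑ j ∈ range (m + 1), ((m.choose j : F) * (-c ^ 2) ^ (m - j)) * y ^ (2 * j + i) := by
    intro y
    rw [sub_eq_add_neg, add_pow, Finset.mul_sum]
    refine Finset.sum_congr rfl fun j _ => ?_
    rw [pow_add, pow_mul]; ring
  simp_rw [e]
  rw [Finset.sum_comm]
  simp_rw [← Finset.mul_sum]
  have e2 : ∀ j ∈ range (m + 1), ((m.choose j : F) * (-c ^ 2) ^ (m - j)) *
      ∑ y : F, y ^ (2 * j + i) = if 2 * j + i = 2 * m then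
        -((m.choose (i / 2) : F) * (-c ^ 2) ^ (i / 2)) else 0 := by
    intro j hj
    have hj' : j ≤ m := by simpa [Nat.lt_succ_iff] using hj
    rw [sum_pow_univ _ (by omega)]
    have : (2 * j + i = Fintype.card F - 1) ↔ 2 * j + i = 2 * m := by omega
    simp only [this]
    split_ifs with h
    · have h1 : i / 2 = m - j := by omega
      rw [h1, Nat.choose_symm hj']; ring
    · ring
  rw [Finset.sum_congr rfl e2]
  split_ifs with h
  · obtain ⟨r, rfl⟩ := h
    rw [Finset.sum_eq_single (m - r)]
    · rw [if_pos (by omega)]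
    · intro b _ hb
      rw [if_neg (by omega)]
    · intro hb
      simp only [mem_range, not_lt] at hb
      omega
  · refine Finset.sum_eq_zero fun j _ => if_neg fun hj => h ⟨m - j, by omega⟩

/-! ### The block and its power sums -/

variable [DecidableEq F]

/-- The set `Q △ (Q + τ)`, written through the quadratic character. -/
def block (τ : F) : Finset F :=
  univ.filter fun x => Xor (quadraticChar F x = 1) (quadraticChar F (x - τ) = 1)

/-- At `0` and `τ` the product `x (x - τ)` vanishes, which the two last terms correct. -/
theorem indicator_block (τ : F) (hτ : τ ≠ 0) (x : F) :
    2 * (if x ∈ block τ then 1 else 0 : ℤ) = 1 - quadraticChar F (x * (x - τ)) +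
      (if x = 0 then quadraticChar F (-τ) else 0) + (if x = τ then quadraticChar F τ else 0) := by
  rw [map_mul]
  simp only [block, mem_filter, mem_univ, true_and]
  by_cases hx0 : x = 0
  · subst hx0
    rcases quadraticChar_dichotomy (neg_ne_zero.2 hτ) with h | h <;> simp [h, hτ.symm, Xor]
  · by_cases hxt : x = τ
    · subst hxt
      rcases quadraticChar_dichotomy hτ with h | h <;> simp [h, hτ, Xor]
    · rcases quadraticChar_dichotomy hx0 with h | h <;>
      rcases quadraticChar_dichotomy (sub_ne_zero.2 hxt) with h' | h' <;>
        simp [h, h', hx0, hxt, Xor]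

/-- The substitution `x = τ u` turns the sum into `χ (-1)` times the Jacobi sum `J(χ, χ)`. -/
theorem sum_quadraticChar (hF : ringChar F ≠ 2) (τ : F) (hτ : τ ≠ 0) :
    ∑ x : F, quadraticChar F (x * (x - τ)) = -1 := by
  have h := jacobiSum_nontrivial_inv (quadraticChar_ne_one hF)
  rw [(quadraticChar_isQuadratic F).inv, jacobiSum] at h
  rw [← Fintype.sum_equiv (Equiv.mulLeft₀ τ hτ) (fun u => quadraticChar F (τ * u * (τ * u - τ)))
    _ (fun _ => rfl)]
  have e : ∀ u : F, quadraticChar F (τ * u * (τ * u - τ)) =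
      quadraticChar F (-1) * (quadraticChar F u * quadraticChar F (1 - u)) := by
    intro u
    rw [show τ * u * (τ * u - τ) = τ ^ 2 * (-1 * (u * (1 - u))) by ring, map_mul,
      quadraticChar_sq_one' hτ, map_mul, map_mul, one_mul]
  simp_rw [e]
  rw [← Finset.mul_sum, h]
  have := quadraticChar_sq_one (F := F) (a := -1) (by simp)
  linear_combination -this

theorem card_block (hF : ringChar F ≠ 2) (τ : F) (hτ : τ ≠ 0) :
    2 * ((block τ).card : ℤ) =
      Fintype.card F + 1 + quadraticChar F (-τ) + quadraticChar F τ := by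
  have h := Finset.sum_congr (rfl : (univ : Finset F) = univ)
    fun x _ => indicator_block τ hτ x
  rw [← Finset.mul_sum] at h
  simp only [Finset.sum_add_distrib, Finset.sum_sub_distrib, sum_quadraticChar hF τ hτ] at h
  simp at h
  simp only [quadraticChar_apply]
  exact h

/-- Power sums of the block, centred at the midpoint `c` of `0` and `τ = 2c`. -/
theorem moment_block (m i : ℕ) (hm : Fintype.card F = 2 * m + 1) (hm0 : 0 < m)
    (hi : i < 2 * m) (hF : ringChar F ≠ 2) (c : F) (hτ : 2 * c ≠ 0) :
    2 * ∑ x ∈ block (2 * c), (x - c) ^ i =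
      (if Even i then (m.choose (i / 2) : F) * (-c ^ 2) ^ (i / 2) else 0) +
      (quadraticChar F (-(2 * c)) : F) * (-c) ^ i + (quadraticChar F (2 * c) : F) * c ^ i := by
  have e : ∀ x : F, 2 * (if x ∈ block (2 * c) then (x - c) ^ i else 0) =
      (x - c) ^ i - (x - c) ^ i * ((x - c) ^ 2 - c ^ 2) ^ m +
      (if x = 0 then (quadraticChar F (-(2 * c)) : F) * (-c) ^ i else 0) +
      (if x = 2 * c then (quadraticChar F (2 * c) : F) * c ^ i else 0) := by
    intro x
    have h := congrArg (Int.cast : ℤ → F) (indicator_block (2 * c) hτ x)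
    push_cast at h
    rw [quadraticChar_eq_pow_of_char_ne_two' hF, show Fintype.card F / 2 = m by omega,
      show x * (x - 2 * c) = (x - c) ^ 2 - c ^ 2 by ring] at h
    have h3 : (if x ∈ block (2 * c) then (x - c) ^ i else 0) =
      (if x ∈ block (2 * c) then 1 else 0) * (x - c) ^ i := by split_ifs <;> simp
    rw [h3, ← mul_assoc, h, add_mul, add_mul, sub_mul]
    congr 1
    · congr 1
      · ring
      · split_ifs with h0
        · rw [h0]; ring
        · ring
    · split_ifs with h0
      · rw [h0]; ring
      · ring
  have h := Finset.sum_congr (rfl : (univ : Finset F) = univ) fun x _ => e x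
  rw [← Finset.mul_sum] at h
  simp only [Finset.sum_add_distrib, Finset.sum_sub_distrib] at h
  rw [Fintype.sum_equiv (Equiv.subRight c) (fun x => (x - c) ^ i) (fun y => y ^ i)
    (fun _ => rfl), Fintype.sum_equiv (Equiv.subRight c)
    (fun x => (x - c) ^ i * ((x - c) ^ 2 - c ^ 2) ^ m)
    (fun y => y ^ i * (y ^ 2 - c ^ 2) ^ m) (fun _ => rfl), sum_pow_mul_pow m i hm hm0 hi,
    sum_pow_univ i (by omega), if_neg (by omega)] at h
  simp only [Finset.sum_ite_mem, univ_inter, Finset.sum_ite_eq', mem_univ, if_true] at h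
  rw [h]
  split_ifs <;> simp

/-! ### Stabilizers -/

omit [Fintype F] [DecidableEq F] in
theorem sum_affine_pow (s : Finset F) (c a β : F) (n : ℕ) :
    ∑ x ∈ s, (a * (x - c) + β) ^ n =
      ∑ j ∈ range (n + 1), (n.choose j : F) * a ^ j * β ^ (n - j) * ∑ x ∈ s, (x - c) ^ j := by
  simp_rw [add_pow, Finset.mul_sum]
  rw [Finset.sum_comm]
  refine Finset.sum_congr rfl fun x _ => Finset.sum_congr rfl fun j _ => ?_
  rw [mul_pow]; ring

omit [Fintype F] in
/-- If `x ↦ a x + b` preserves `s`, power sums of `s` are invariant under it; in the coordinate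
`x - c` the map reads `u ↦ a u + (a c + b - c)`. -/
theorem sum_affine_pow_of_image (s : Finset F) (c a b : F) (ha : a ≠ 0)
    (h : s.image (fun x => a * x + b) = s) (n : ℕ) :
    ∑ x ∈ s, (a * (x - c) + (a * c + b - c)) ^ n = ∑ x ∈ s, (x - c) ^ n := by
  conv_rhs => rw [← h]
  rw [Finset.sum_image]
  · refine Finset.sum_congr rfl fun x _ => ?_
    congr 1; ring
  · intro x _ y _ hxy
    exact mul_left_cancel₀ ha (add_right_cancel hxy)

/-- For `q ≡ 3 (mod 4)` the block has trivial stabilizer: an affine map preserving it fixes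
`c + 2d`, where `d = χ(τ) c`, so it scales the power sums `R n` about that point by `a ^ n`, and
hence `a ^ n = 1` whenever `R n ≠ 0`. -/
theorem stabilizer_three (m : ℕ) (hm : Fintype.card F = 2 * m + 1) (hm5 : 5 ≤ m)
    (hF : ringChar F ≠ 2) (hneg : quadraticChar F (-1) = -1) (τ : F) (hτ : τ ≠ 0)
    (a b : F) (ha : a ≠ 0) (h : (block τ).image (fun x => a * x + b) = block τ) :
    a = 1 ∧ b = 0 := by
  have h2 : (2 : F) ≠ 0 := Ring.two_ne_zero hF
  obtain ⟨c, rfl⟩ : ∃ c, τ = 2 * c := ⟨τ / 2, by field_simp⟩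
  obtain ⟨v1, v2, v3, v4, v5⟩ := choose_vals (F := F) m hm (by omega)
  have mom (i : ℕ) (hi : i < 10) := moment_block m i hm (by omega) (by omega) hF c hτ
  have hn : quadraticChar F (-(2 * c)) = -quadraticChar F (2 * c) := by
    rw [← neg_one_mul, map_mul, hneg, neg_one_mul]
  rw [hn] at mom
  obtain ⟨d, ε, hε, hd⟩ : ∃ d ε : F, ε ^ 2 = 1 ∧ d = ε * c ∧
      (quadraticChar F (2 * c) : F) = ε := by
    refine ⟨_, (quadraticChar F (2 * c) : F), ?_, rfl, rfl⟩
    exact_mod_cast congrArg (Int.cast : ℤ → F) (quadraticChar_sq_one hτ)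
  obtain ⟨hd, hχ⟩ := hd
  have hd2 : c ^ 2 = d ^ 2 := by rw [hd]; linear_combination (-c ^ 2) * hε
  have hd0 : d ≠ 0 := by
    intro h0
    rw [h0] at hd2
    have : c = 0 := by simpa using hd2
    exact hτ (by rw [this, mul_zero])
  push_cast at mom
  rw [hχ] at mom
  have inv := sum_affine_pow_of_image (block (2 * c)) (c + 2 * d) a b ha h
  have inv1 := sum_affine_pow_of_image (block (2 * c)) c a b ha h 1
  have aff (n : ℕ) := sum_affine_pow (block (2 * c)) c 1 (-2 * d) n
  rw [sum_affine_pow] at inv1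
  generalize hS : (fun j : ℕ => ∑ x ∈ block (2 * c), (x - c) ^ j) = S
  have hS' (j : ℕ) : ∑ x ∈ block (2 * c), (x - c) ^ j = S j := congrFun hS j
  simp only [hS'] at mom aff inv1
  -- `S j` is the `j`-th power sum of the block about `c`; as `c² = d²`, all are expressed in `d`.
  have m0 : 2 * S 0 = 1 := by
    have := mom 0 (by norm_num); norm_num at this; linear_combination this
  have m1 : S 1 = d := by
    have := mom 1 (by norm_num); norm_num at this
    exact mul_left_cancel₀ h2 (by rw [hd]; linear_combination this)
  have m2 : 4 * S 2 = d ^ 2 := by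
    have := mom 2 (by norm_num); norm_num [hd2] at this
    linear_combination 2 * this - d ^ 2 * v1
  have m3 : S 3 = d ^ 3 := by
    have := mom 3 (by norm_num)
    norm_num [show ¬ Even 3 by decide] at this
    exact mul_left_cancel₀ h2 (by rw [hd]; linear_combination this - 2 * c ^ 3 * ε * hε)
  have m4 : 16 * S 4 = 3 * d ^ 4 := by
    have := mom 4 (by norm_num)
    norm_num [show Even 4 by decide, hd2] at this
    linear_combination 8 * this + d ^ 4 * v2
  have m5 : S 5 = d ^ 5 := by
    have := mom 5 (by norm_num)
    norm_num [show ¬ Even 5 by decide] at this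
    exact mul_left_cancel₀ h2
      (by rw [hd]; linear_combination this - 2 * c ^ 5 * ε * (ε ^ 2 + 1) * hε)
  have m6 : 32 * S 6 = 5 * d ^ 6 := by
    have := mom 6 (by norm_num)
    norm_num [show Even 6 by decide, hd2] at this
    linear_combination 16 * this - d ^ 6 * v3
  have m7 : S 7 = d ^ 7 := by
    have := mom 7 (by norm_num)
    norm_num [show ¬ Even 7 by decide] at this
    exact mul_left_cancel₀ h2
      (by rw [hd]; linear_combination this - 2 * c ^ 7 * ε * (ε ^ 4 + ε ^ 2 + 1) * hε)
  have m8 : 256 * S 8 = 35 * d ^ 8 := by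
    have := mom 8 (by norm_num)
    norm_num [show Even 8 by decide, hd2] at this
    linear_combination 128 * this + d ^ 8 * v4
  have hβ : a * c + b - c = 2 * d * (1 - a) := by
    norm_num [Finset.sum_range_succ, m1] at inv1
    refine mul_left_cancel₀ h2 ?_
    linear_combination 4 * inv1 - 2 * (a * c + b - c) * m0
  have hfix : a * (c + 2 * d) + b - (c + 2 * d) = 0 := by linear_combination hβ
  rw [hfix] at inv
  obtain ⟨R, hR⟩ : ∃ R : ℕ → F, ∀ n, R n = ∑ x ∈ block (2 * c), (x - (c + 2 * d)) ^ n :=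
    ⟨_, fun _ => rfl⟩
  have invR (n : ℕ) : (a ^ n - 1) * R n = 0 := by
    have := inv n
    simp only [add_zero, mul_pow] at this
    rw [← Finset.mul_sum, ← hR] at this
    linear_combination this
  have affR (n : ℕ) : R n = ∑ j ∈ range (n + 1),
      (n.choose j : F) * 1 ^ j * (-2 * d) ^ (n - j) * S j := by
    rw [← aff, hR]
    exact Finset.sum_congr rfl fun x _ => by congr 1; ring
  have r2 : 4 * R 2 = -7 * d ^ 2 := by
    rw [affR]
    norm_num [Finset.sum_range_succ, Nat.choose, m1]
    linear_combination m2 + 8 * d ^ 2 * m0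
  have r3 : 2 * R 3 = 15 * d ^ 3 := by
    rw [affR]
    norm_num [Finset.sum_range_succ, Nat.choose, m1, m3]
    linear_combination (-3 * d) * m2 - 8 * d ^ 3 * m0
  have r5 : 8 * R 5 = 665 * d ^ 5 := by
    rw [affR]
    norm_num [Finset.sum_range_succ, Nat.choose, m1, m3, m5]
    linear_combination (-5 * d) * m4 - 160 * d ^ 3 * m2 - 128 * d ^ 5 * m0
  have k2 : (a ^ 2 - 1) * 7 = 0 := by
    refine mul_right_cancel₀ (pow_ne_zero 2 hd0) ?_
    linear_combination (-4) * invR 2 + (a ^ 2 - 1) * r2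
  have k3 : (a ^ 3 - 1) * 15 = 0 := by
    refine mul_right_cancel₀ (pow_ne_zero 3 hd0) ?_
    linear_combination 2 * invR 3 - (a ^ 3 - 1) * r3
  have k5 : (a ^ 5 - 1) * 665 = 0 := by
    refine mul_right_cancel₀ (pow_ne_zero 5 hd0) ?_
    linear_combination 8 * invR 5 - (a ^ 5 - 1) * r5
  have ha1 : a = 1 := by
    by_cases h7 : (7 : F) = 0
    -- In characteristic `7` the sums `R 2` and `R 5` vanish, but `R 3` and `R 8` do not.
    · have r8 : R 8 = -2 * d ^ 8 := by
        rw [affR]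
        norm_num [Finset.sum_range_succ, Nat.choose, m1, m3, m5, m7]
        linear_combination 2 * m8 + 128 * d ^ 8 * m0 + (10 * d ^ 8 - 73 * S 8 +
          16 * d ^ 2 * S 6 - 64 * d ^ 8 + 160 * d ^ 4 * S 4 - 256 * d ^ 8 +
          256 * d ^ 6 * S 2 - 130 * d ^ 8) * h7
      have k8 : a ^ 8 = 1 := by
        refine mul_right_cancel₀ (mul_ne_zero h2 (pow_ne_zero 8 hd0)) ?_
        linear_combination -invR 8 + (a ^ 8 - 1) * r8
      have a3 : a ^ 3 = 1 := by linear_combination k3 - 2 * (a ^ 3 - 1) * h7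
      linear_combination (a ^ 6 + a ^ 3 + 1) * a3 - a * k8
    · have a2 : a ^ 2 - 1 = 0 := (mul_eq_zero.1 k2).resolve_right h7
      by_cases h5 : (5 : F) = 0
      -- In characteristic `5` the sums `R 3` and `R 5` vanish, but `R 7` does not; using it
      -- avoids showing that this characteristic forces `q ≡ 1 (mod 4)`.
      · have r7 : R 7 = d ^ 7 := by
          rw [affR]
          norm_num [Finset.sum_range_succ, Nat.choose, m1, m3, m5, m7]
          linear_combination (-42 * d) * m6 - 168 * d ^ 5 * m2 - 64 * d ^ 7 * m0 +
            (172 * d ^ 7 - 14 * d * (3 * d ^ 6 - 19 * S 6) - 56 * d ^ 3 * S 4) * h5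
        have k7 : a ^ 7 = 1 := by
          refine mul_right_cancel₀ (pow_ne_zero 7 hd0) ?_
          linear_combination invR 7 - (a ^ 7 - 1) * r7
        linear_combination k7 - a * (a ^ 4 + a ^ 2 + 1) * a2
      · refine mul_right_cancel₀ h5 ?_
        linear_combination k5 - 44 * k3 + (44 * 15 * a - 665 * a * (a ^ 2 + 1)) * a2
  exact ⟨ha1, by rw [ha1] at hβ; linear_combination hβ⟩

/-- For `q ≡ 1 (mod 4)` the stabilizer of the block consists of the identity and the
reflection `x ↦ τ - x`. The odd power sums about `c` vanish. If the block has nonzero cardinality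
in `F`, the map must fix `c`, and the even power sums give `a ^ 2 = 1`. Otherwise `F` has
characteristic `3` and `χ(τ) = 1`, and the power sums of degree `5` and `11` exclude that `c`
is moved. -/
theorem stabilizer_one (m : ℕ) (hm : Fintype.card F = 2 * m + 1) (hm6 : 6 ≤ m)
    (hF : ringChar F ≠ 2) (hneg : quadraticChar F (-1) = 1) (τ : F) (hτ : τ ≠ 0)
    (a b : F) (ha : a ≠ 0) (h : (block τ).image (fun x => a * x + b) = block τ) :
    (a = 1 ∧ b = 0) ∨ (a = -1 ∧ b = τ) := by
  have h2 : (2 : F) ≠ 0 := Ring.two_ne_zero hF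
  obtain ⟨c, rfl⟩ : ∃ c, τ = 2 * c := ⟨τ / 2, by field_simp⟩
  have hc : c ≠ 0 := right_ne_zero_of_mul hτ
  suffices key : a ^ 2 = 1 ∧ a * c + b - c = 0 by
    obtain ⟨k1, k2⟩ := key
    rcases (mul_self_eq_one_iff (a := a)).1 (by rw [← sq, k1]) with rfl | rfl
    · exact Or.inl ⟨rfl, by linear_combination k2⟩
    · exact Or.inr ⟨rfl, by linear_combination k2⟩
  obtain ⟨v1, v2, v3, v4, v5⟩ := choose_vals (F := F) m hm (by omega)
  have mom (i : ℕ) (hi : i < 12) := moment_block m i hm (by omega) (by omega) hF c hτ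
  have hn : quadraticChar F (-(2 * c)) = quadraticChar F (2 * c) := by
    rw [← neg_one_mul, map_mul, hneg, one_mul]
  rw [hn] at mom
  obtain ⟨ε, hε, hχ⟩ : ∃ ε : F, (ε = 1 ∨ ε = -1) ∧ (quadraticChar F (2 * c) : F) = ε := by
    refine ⟨(quadraticChar F (2 * c) : F), ?_, rfl⟩
    rcases quadraticChar_dichotomy hτ with h | h <;> simp [h]
  rw [hχ] at mom
  have inv := sum_affine_pow_of_image (block (2 * c)) c a b ha h
  simp only [sum_affine_pow] at inv
  generalize hS : (fun j : ℕ => ∑ x ∈ block (2 * c), (x - c) ^ j) = S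
  have hS' (j : ℕ) : ∑ x ∈ block (2 * c), (x - c) ^ j = S j := congrFun hS j
  simp only [hS'] at mom inv
  generalize a * c + b - c = β at *
  -- `S j` is the `j`-th power sum of the block about `c`, and `β` the displacement of `c`.
  have m0 : 2 * S 0 = 1 + 2 * ε := by
    have := mom 0 (by norm_num); norm_num at this; linear_combination this
  have m2 : 4 * S 2 = (1 + 4 * ε) * c ^ 2 := by
    have := mom 2 (by norm_num); norm_num at this
    linear_combination 2 * this - c ^ 2 * v1
  have m4 : 16 * S 4 = (3 + 16 * ε) * c ^ 4 := by
    have := mom 4 (by norm_num)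
    norm_num [show Even 4 by decide] at this
    linear_combination 8 * this + c ^ 4 * v2
  have m6 : 32 * S 6 = (5 + 32 * ε) * c ^ 6 := by
    have := mom 6 (by norm_num)
    norm_num [show Even 6 by decide] at this
    linear_combination 16 * this - c ^ 6 * v3
  have m10 : 512 * S 10 = (63 + 512 * ε) * c ^ 10 := by
    have := mom 10 (by norm_num)
    norm_num [show Even 10 by decide] at this
    linear_combination 256 * this - c ^ 10 * v5
  have modd (i : ℕ) (hi : i < 12) (ho : Odd i) : S i = 0 := by
    have := mom i hi
    rw [if_neg (Nat.not_even_iff_odd.2 ho), ho.neg_pow] at this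
    refine mul_left_cancel₀ h2 ?_
    linear_combination this
  have o1 := modd 1 (by norm_num) (by decide)
  have o3 := modd 3 (by norm_num) (by decide)
  have o5 := modd 5 (by norm_num) (by decide)
  have o7 := modd 7 (by norm_num) (by decide)
  have o9 := modd 9 (by norm_num) (by decide)
  have o11 := modd 11 (by norm_num) (by decide)
  have b0 : β * S 0 = 0 := by
    have := inv 1
    norm_num [Finset.sum_range_succ, o1] at this
    rcases this with h | h <;> simp [h]
  have inv0 (hβ : β = 0) (n : ℕ) : (a ^ n - 1) * S n = 0 := by
    have := inv n
    rw [Finset.sum_range_succ, Finset.sum_eq_zero] at this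
    · simp at this; linear_combination this
    · intro j hj
      rw [hβ, zero_pow (by have := mem_range.1 hj; omega)]; ring
  have k2 (hβ : β = 0) : (a ^ 2 - 1) * (1 + 4 * ε) = 0 := by
    refine mul_right_cancel₀ (pow_ne_zero 2 hc) ?_
    linear_combination 4 * inv0 hβ 2 - (a ^ 2 - 1) * m2
  have k4 (hβ : β = 0) : (a ^ 4 - 1) * (3 + 16 * ε) = 0 := by
    refine mul_right_cancel₀ (pow_ne_zero 4 hc) ?_
    linear_combination 16 * inv0 hβ 4 - (a ^ 4 - 1) * m4
  have k6 (hβ : β = 0) : (a ^ 6 - 1) * (5 + 32 * ε) = 0 := by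
    refine mul_right_cancel₀ (pow_ne_zero 6 hc) ?_
    linear_combination 32 * inv0 hβ 6 - (a ^ 6 - 1) * m6
  have k10 (hβ : β = 0) : (a ^ 10 - 1) * (63 + 512 * ε) = 0 := by
    refine mul_right_cancel₀ (pow_ne_zero 10 hc) ?_
    linear_combination 512 * inv0 hβ 10 - (a ^ 10 - 1) * m10
  rcases hε with rfl | rfl
  · by_cases h3 : (3 : F) = 0
    · have s0 : S 0 = 0 := by linear_combination (S 0 - 1) * h3 - m0
      have s2 : S 2 = -c ^ 2 := by linear_combination m2 + (2 * c ^ 2 - S 2) * h3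
      have s4 : S 4 = c ^ 4 := by linear_combination m4 + (6 * c ^ 4 - 5 * S 4) * h3
      have s10 : S 10 = c ^ 10 := by
        linear_combination -m10 + (171 * S 10 - 192 * c ^ 10) * h3
      have a2 : a ^ 2 = 1 := by
        have := inv 2
        norm_num [Finset.sum_range_succ, Nat.choose, o1, s0, s2] at this
        exact mul_right_cancel₀ (pow_ne_zero 2 hc) (by linear_combination this)
      refine ⟨a2, ?_⟩
      have e5 : β * (c ^ 4 + β ^ 2 * c ^ 2) = 0 := by
        have := inv 5
        norm_num [Finset.sum_range_succ, Nat.choose, o1, o3, o5, s0, s2, s4] at this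
        have a4 : a ^ 4 = 1 := by linear_combination (a ^ 2 + 1) * a2
        rw [a2, a4] at this
        linear_combination -this + (2 * β * c ^ 4 - 3 * β ^ 3 * c ^ 2) * h3
      have e11 : β * (c ^ 10 + β ^ 8 * c ^ 2) = 0 := by
        have := inv 11
        norm_num [Finset.sum_range_succ, Nat.choose, o1, o3, o5, o7, o9, o11, s0, s2, s4,
          s10] at this
        have a10 : a ^ 10 = 1 := by
          linear_combination (a ^ 8 + a ^ 6 + a ^ 4 + a ^ 2 + 1) * a2
        rw [a2, a10] at this
        linear_combination -this + (4 * β * c ^ 10 - 18 * β ^ 9 * c ^ 2 +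
          55 * a ^ 8 * β ^ 3 * S 8 + 154 * a ^ 6 * β ^ 5 * S 6 +
          110 * a ^ 4 * β ^ 7 * c ^ 4) * h3
      -- A displacement `β ≠ 0` of `c` would satisfy both `β² = -c²` and `β⁸ = -c⁸`.
      by_contra hβ
      have f1 : c ^ 2 + β ^ 2 = 0 := by
        have := (mul_eq_zero.1 e5).resolve_left hβ
        refine mul_left_cancel₀ (pow_ne_zero 2 hc) ?_
        linear_combination this
      have f2 : c ^ 8 + β ^ 8 = 0 := by
        have := (mul_eq_zero.1 e11).resolve_left hβ
        refine mul_left_cancel₀ (pow_ne_zero 2 hc) ?_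
        linear_combination this
      have : 2 * c ^ 8 = 0 := by
        linear_combination f2 + (c ^ 4 + β ^ 4) * (c ^ 2 - β ^ 2) * f1
      exact (mul_ne_zero h2 (pow_ne_zero 8 hc)) this
    · have hβ : β = 0 := by
        refine (mul_eq_zero.1 b0).resolve_right fun h0 => h3 ?_
        linear_combination 2 * h0 - m0
      refine ⟨?_, hβ⟩
      have k2 := k2 hβ
      have k4 := k4 hβ
      have k6 := k6 hβ
      by_cases h5 : (5 : F) = 0
      · have a4 : a ^ 4 = 1 := by linear_combination -k4 + 4 * (a ^ 4 - 1) * h5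
        have a6 : a ^ 6 = 1 := by linear_combination 3 * k6 - 22 * (a ^ 6 - 1) * h5
        linear_combination a6 - a ^ 2 * a4
      · have : a ^ 2 - 1 = 0 :=
          (mul_eq_zero.1 k2).resolve_right fun h0 => h5 (by linear_combination h0)
        linear_combination this
  · have hβ : β = 0 := by
      refine (mul_eq_zero.1 b0).resolve_right fun h0 => one_ne_zero (α := F) ?_
      linear_combination m0 - 2 * h0
    refine ⟨?_, hβ⟩
    have k2 := k2 hβ
    have k4 := k4 hβ
    have k10 := k10 hβ
    by_cases h3 : (3 : F) = 0
    · have a4 : a ^ 4 = 1 := by linear_combination -k4 - 4 * (a ^ 4 - 1) * h3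
      have a10 : a ^ 10 = 1 := by linear_combination k10 + 150 * (a ^ 10 - 1) * h3
      linear_combination a10 - a ^ 2 * (a ^ 4 + 1) * a4
    · have : a ^ 2 - 1 = 0 :=
        (mul_eq_zero.1 k2).resolve_right fun h0 => h3 (by linear_combination -h0)
      linear_combination this

/-! ### Counting blocks -/

theorem block_reflect (hneg : quadraticChar F (-1) = 1) (τ : F) :
    (block τ).image (fun x => -1 * x + τ) = block τ := by
  have hx (x : F) (h : x ∈ block τ) : -1 * x + τ ∈ block τ := by
    simp only [block, mem_filter, mem_univ, true_and] at h ⊢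
    have e1 : -1 * x + τ = -1 * (x - τ) := by ring
    have e2 : -1 * x + τ - τ = -1 * x := by ring
    rw [e2, e1, map_mul, map_mul, hneg, one_mul, one_mul]
    exact h.symm
  refine Finset.eq_of_subset_of_card_le ?_ (le_of_eq ?_)
  · intro z hz
    obtain ⟨x, h, rfl⟩ := mem_image.1 hz
    exact hx x h
  · rw [Finset.card_image_of_injective]
    intro x y hxy
    simpa using hxy

/-- Orbit counting: if `G` is the stabilizer of `s` in `GA₁(q)`, encoded as the set of pairs
`(a, b)` of coefficients, then each pair of points lies in `k (k - 1) / |G|` blocks. -/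
theorem count_blocks (s : Finset F) (G : Finset (F × F))
    (hG : ∀ p : F × F, p ∈ G ↔ p.1 ≠ 0 ∧ s.image (fun x => p.1 * x + p.2) = s)
    (x y : F) (hxy : x ≠ y) :
    {C : Set F | (∃ a b : F, a ≠ 0 ∧ C = (fun z => a * z + b) '' (s : Set F)) ∧
        x ∈ C ∧ y ∈ C}.ncard * G.card = s.card * (s.card - 1) := by
  set φ : F × F → Finset F := fun p => s.image (fun z => p.1 * z + p.2) with hφ
  set T : Finset (F × F) := univ.filter fun p => p.1 ≠ 0 ∧ x ∈ φ p ∧ y ∈ φ p with hT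
  have hset : {C : Set F | (∃ a b : F, a ≠ 0 ∧ C = (fun z => a * z + b) '' (s : Set F)) ∧
        x ∈ C ∧ y ∈ C} = (fun f : Finset F => (f : Set F)) '' (T.image φ : Finset (Finset F)) := by
    ext C
    simp only [Set.mem_ofPred_eq, Set.mem_image, mem_coe, mem_image, hT, mem_filter, mem_univ,
      true_and, Prod.exists]
    constructor
    · rintro ⟨⟨a, b, ha, rfl⟩, hx, hy⟩
      have e : ((φ (a, b) : Finset F) : Set F) = (fun z => a * z + b) '' (s : Set F) := by
        simp [hφ]
      rw [← e] at hx hy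
      exact ⟨φ (a, b), ⟨a, b, ⟨ha, hx, hy⟩, rfl⟩, e⟩
    · rintro ⟨_, ⟨a, b, ⟨ha, hx, hy⟩, rfl⟩, rfl⟩
      exact ⟨⟨a, b, ha, by simp [hφ]⟩, hx, hy⟩
  have hcardT : T.card = s.card * (s.card - 1) := by
    rw [Nat.mul_sub_one, ← Finset.offDiag_card]
    refine Finset.card_nbij' (fun p => ((x - p.2) / p.1, (y - p.2) / p.1))
      (fun w => ((x - y) / (w.1 - w.2), x - (x - y) / (w.1 - w.2) * w.1)) ?_ ?_ ?_ ?_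
    · rintro ⟨a, b⟩ hp
      simp only [hT, hφ, coe_filter, mem_univ, true_and, Set.mem_ofPred_eq, mem_image] at hp
      obtain ⟨ha, ⟨u, hu, rfl⟩, v, hv, rfl⟩ := hp
      have huv : u ≠ v := fun h => hxy (by rw [h])
      simp only [coe_offDiag, Set.mem_offDiag, mem_coe]
      simpa [ha] using ⟨hu, hv, huv⟩
    · rintro ⟨u, v⟩ hw
      simp only [coe_offDiag, Set.mem_offDiag, mem_coe] at hw
      obtain ⟨hu, hv, huv⟩ := hw
      have huv' := sub_ne_zero.2 huv
      simp only [hT, hφ, coe_filter, mem_univ, true_and, Set.mem_ofPred_eq, mem_image]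
      refine ⟨div_ne_zero (sub_ne_zero.2 hxy) huv', ⟨u, hu, by ring⟩, v, hv, ?_⟩
      field_simp; ring
    · rintro ⟨a, b⟩ hp
      simp only [hT, coe_filter, mem_univ, true_and, Set.mem_ofPred_eq] at hp
      have ha := hp.1
      have hxy' := sub_ne_zero.2 hxy
      have e : (x - b) / a - (y - b) / a = (x - y) / a := by ring
      ext
      · simp only [e]; field_simp
      · simp only [e]; field_simp; ring
    · rintro ⟨u, v⟩ hw
      simp only [coe_offDiag, Set.mem_offDiag, mem_coe] at hw
      have huv' := sub_ne_zero.2 hw.2.2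
      have hxy' := sub_ne_zero.2 hxy
      ext
      · simp only; field_simp; ring
      · simp only; field_simp; ring
  rw [hset, Set.ncard_image_of_injective _ Finset.coe_injective, Set.ncard_coe_finset, ← hcardT,
    Finset.card_eq_sum_card_image φ T]
  refine (Finset.sum_const_nat ?_).symm
  intro C hC
  obtain ⟨⟨a₀, b₀⟩, hp, rfl⟩ := mem_image.1 hC
  have hpt := (mem_filter.1 hp).2
  have ha₀ : a₀ ≠ 0 := hpt.1
  -- The fibre over the block of `(a₀, b₀)` is the left coset of the stabilizer.
  have hfib : T.filter (fun p => φ p = φ (a₀, b₀)) =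
      G.image (fun g => (a₀ * g.1, a₀ * g.2 + b₀)) := by
    ext ⟨a, b⟩
    simp only [mem_filter, mem_image, Prod.exists, Prod.mk.injEq]
    constructor
    · rintro ⟨hpT, he⟩
      have ha : a ≠ 0 := ((mem_filter.1 hpT).2).1
      refine ⟨a / a₀, (b - b₀) / a₀, (hG _).2 ⟨div_ne_zero ha ha₀, ?_⟩, by field_simp,
        by field_simp; ring⟩
      have h1 := congrArg (Finset.image fun z => (z - b₀) / a₀) he
      simp only [hφ, Finset.image_image] at h1
      have i1 : ((fun z => (z - b₀) / a₀) ∘ fun z => a₀ * z + b₀) = id := by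
        funext z; simp [ha₀]
      have i2 : ((fun z => (z - b₀) / a₀) ∘ fun z => a * z + b) =
          fun z => a / a₀ * z + (b - b₀) / a₀ := by
        funext z; simp only [Function.comp]; ring
      rw [i1, i2, Finset.image_id] at h1
      exact h1
    · rintro ⟨g, h, hg, rfl, rfl⟩
      obtain ⟨hg0, hgs⟩ := (hG _).1 hg
      have he : φ (a₀ * g, a₀ * h + b₀) = φ (a₀, b₀) := by
        simp only [hφ]
        conv_rhs => rw [← hgs]
        rw [Finset.image_image]
        congr 1
        funext z; simp only [Function.comp]; ring
      refine ⟨mem_filter.2 ⟨mem_univ _, mul_ne_zero ha₀ hg0, ?_⟩, he⟩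
      rw [he]; exact hpt.2
  rw [hfib, Finset.card_image_of_injective]
  rintro ⟨g, h⟩ ⟨g', h'⟩ hgg
  simp only [Prod.mk.injEq] at hgg
  ext
  · exact mul_left_cancel₀ ha₀ hgg.1
  · exact mul_left_cancel₀ ha₀ (add_right_cancel hgg.2)

end DesignProof

/-- For an odd prime power `q > 9`, `Q` the nonzero squares, `N` the nonsquares
of `GF(q)*` and `τ ∈ GF(q)*`, the orbit of `B_τ = Q △ (Q + τ)` under `GA₁(q)` is
the block set of a 2-(q, k, λ) design on `GF(q)`, where `k = (q+1)/2` if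
`q ≡ 3 (mod 4)`, `k = (q+3)/2` if `q ≡ 1 (mod 4)` and `τ ∈ Q`, `k = (q-1)/2` if
`q ≡ 1 (mod 4)` and `τ ∈ N`; and `λ = k(k-1)` if `q ≡ 3 (mod 4)`,
`λ = k(k-1)/2` if `q ≡ 1 (mod 4)`. -/
theorem ga1_design_from_Q_symmDiff_Q_add_tau (F : Type*) [Field F] [Fintype F]
    (q : ℕ) (hq : q = Fintype.card F) (hodd : Odd q) (h9 : 9 < q)
    (τ : F) (hτ : τ ≠ 0)
    (Q N : Set F) (hQ : Q = {x : F | x ≠ 0 ∧ IsSquare x})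
    (hN : N = {x : F | x ≠ 0 ∧ ¬ IsSquare x})
    (B : Set F) (hB : B = symmDiff Q {x : F | ∃ y ∈ Q, x = y + τ})
    (k lam : ℕ)
    (hk3 : q % 4 = 3 → k = (q + 1) / 2)
    (hk1Q : q % 4 = 1 → τ ∈ Q → k = (q + 3) / 2)
    (hk1N : q % 4 = 1 → τ ∈ N → k = (q - 1) / 2)
    (hl3 : q % 4 = 3 → lam = k * (k - 1))
    (hl1 : q % 4 = 1 → lam = k * (k - 1) / 2) :
    (∀ C ∈ {C : Set F | ∃ a b : F, a ≠ 0 ∧ C = (fun x => a * x + b) '' B}, C.ncard = k) ∧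
    (∀ x y : F, x ≠ y →
      {C : Set F | (∃ a b : F, a ≠ 0 ∧ C = (fun x => a * x + b) '' B) ∧
        x ∈ C ∧ y ∈ C}.ncard = lam) := by
  classical
  obtain ⟨m, hm⟩ := hodd
  have hcard : Fintype.card F = 2 * m + 1 := by omega
  have hF : ringChar F ≠ 2 := by
    intro h
    have := FiniteField.even_card_of_char_two h
    omega
  have hBs : B = ((DesignProof.block τ : Finset F) : Set F) := by
    ext x
    have h1 (z : F) : quadraticChar F z = 1 ↔ z ≠ 0 ∧ IsSquare z := by
      by_cases hz : z = 0
      · simp [hz]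
      · rw [quadraticChar_one_iff_isSquare hz]; simp [hz]
    have h2 : (∃ y ∈ Q, x = y + τ) ↔ quadraticChar F (x - τ) = 1 := by
      rw [h1, hQ]
      constructor
      · rintro ⟨y, hy, rfl⟩
        simpa using hy
      · intro h
        exact ⟨x - τ, h, by ring⟩
    have h3 : x ∈ Q ↔ quadraticChar F x = 1 := by rw [h1, hQ]; rfl
    have h4 : x ∈ DesignProof.block τ ↔
        Xor (quadraticChar F x = 1) (quadraticChar F (x - τ) = 1) := by
      simp only [DesignProof.block, Finset.mem_filter, Finset.mem_univ, true_and]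
    rw [Finset.mem_coe, h4, hB, Set.mem_symmDiff, Set.mem_ofPred_eq, h2, h3, Xor]
  have hchi := quadraticChar_neg_one hF
  have hneg : quadraticChar F (-τ) = quadraticChar F (-1) * quadraticChar F τ := by
    rw [← map_mul, neg_one_mul]
  have hc := DesignProof.card_block hF τ hτ
  rw [hneg] at hc
  have hQτ : quadraticChar F τ = 1 → τ ∈ Q := fun h => by
    rw [hQ]; exact ⟨hτ, (quadraticChar_one_iff_isSquare hτ).1 h⟩
  have hNτ : quadraticChar F τ = -1 → τ ∈ N := fun h => by
    rw [hN]; exact ⟨hτ, quadraticChar_neg_one_iff_not_isSquare.1 h⟩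
  have hmod : q % 4 = 1 ∨ q % 4 = 3 := by omega
  have hm1 : q % 4 = 1 → quadraticChar F (-1) = 1 := fun h => by
    rw [hchi, ← hq, ZMod.χ₄_nat_one_mod_four h]
  have hm3 : q % 4 = 3 → quadraticChar F (-1) = -1 := fun h => by
    rw [hchi, ← hq, ZMod.χ₄_nat_three_mod_four h]
  have hk : (DesignProof.block τ).card = k := by
    rcases hmod with h | h
    · rw [hm1 h] at hc
      rcases quadraticChar_dichotomy hτ with h' | h'
      · rw [hk1Q h (hQτ h')]; rw [h'] at hc; omega
      · rw [hk1N h (hNτ h')]; rw [h'] at hc; omega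
    · rw [hm3 h] at hc
      rw [hk3 h]; omega
  rw [hBs]
  constructor
  · rintro C ⟨a, b, ha, rfl⟩
    rw [Set.ncard_image_of_injective, Set.ncard_coe_finset, hk]
    intro x y hxy
    exact mul_left_cancel₀ ha (add_right_cancel hxy)
  · intro x y hxy
    rcases hmod with h | h
    · have h2 : (1 : F) ≠ -1 := (Ring.neg_one_ne_one_of_char_ne_two hF).symm
      have key := DesignProof.count_blocks (DesignProof.block τ) {(1, 0), (-1, τ)} (by
        rintro ⟨a, b⟩
        simp only [Finset.mem_insert, Finset.mem_singleton, Prod.mk.injEq]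
        constructor
        · rintro (⟨rfl, rfl⟩ | ⟨rfl, rfl⟩)
          · simp
          · exact ⟨by simp, DesignProof.block_reflect (hm1 h) _⟩
        · rintro ⟨ha, h'⟩
          exact DesignProof.stabilizer_one m hcard (by omega) hF (hm1 h) τ hτ a b ha h') x y hxy
      rw [Finset.card_pair (by simp [h2]), hk] at key
      rw [hl1 h]; omega
    · have key := DesignProof.count_blocks (DesignProof.block τ) {(1, 0)} (by
        rintro ⟨a, b⟩
        simp only [Finset.mem_singleton, Prod.mk.injEq]
        constructor
        · rintro ⟨rfl, rfl⟩
          simp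
        · rintro ⟨ha, h'⟩
          exact DesignProof.stabilizer_three m hcard (by omega) hF (hm3 h) τ hτ a b ha h')
        x y hxy
      rw [Finset.card_singleton, hk, mul_one] at key
      rw [hl3 h, key]
end

section
/- Let q = 2^m where m ≥ 4 is even, and let Tr denote the absolute trace map from GF(2^m) to GF(2). Then the set B = {u ∈ GF(q) : Tr(u³) = 1} has cardinality 2^{m-1} + (-2)^{m/2}. -/
/-!
Put `e z = (-1)^z` for `z : ZMod 2`, `χ u = e (Tr u)` and `S = ∑ u, χ (u ^ 3)`. If `N` is the
cardinality in question and `q = 2 ^ m`, then `S = q - 2 N`, so it suffices to show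
`S = (-2) ^ (m / 2 + 1)`.

Up to sign this follows by squaring (`sq_sum_cube`): substituting `y = x + u`,
`S ^ 2 = ∑ u, χ (u ^ 3) * ∑ x, χ (x ^ 2 * u + x * u ^ 2)`. The inner sum runs over the values of a
sign character of the additive group, so it is `q` or `0` according to whether the additive map
`x ↦ Tr (x ^ 2 * u + x * u ^ 2) = Tr (x ^ 2 * (u + u ^ 4))` vanishes, that is, whether `u ^ 4 = u`.
As `m` is even, `F` contains the field with four elements, on which `u ^ 3 ∈ {0, 1}` has trace `0`;
hence `S ^ 2 = 4 q`.

The sign is found modulo `3`: multiplication by a primitive cube root of unity permutes the set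
`Tr (u ^ 3) = 1` without fixed points, so `3 ∣ N` (`three_dvd_card`) and `S ≡ q ≡ 1`, while
`(-2) ^ (m / 2 + 1) ≡ 1` as well.
-/

namespace TraceCube

open Finset

/-- The nontrivial sign character `z ↦ (-1)^z` of `ZMod 2`, with integer values. -/
def e (z : ZMod 2) : ℤ := if z = 0 then 1 else -1

lemma e_zero : e 0 = 1 := by decide

lemma e_add : ∀ a b : ZMod 2, e (a + b) = e a * e b := by decide

lemma e_eq : ∀ a : ZMod 2, e a = 1 - 2 * (if a = 1 then 1 else 0) := by decide

lemma e_of_ne : ∀ a : ZMod 2, a ≠ 0 → e a = -1 := by decide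

/-- Orthogonality: a nontrivial sign character of a finite group sums to zero. -/
lemma sum_e_eq_zero {G : Type*} [AddCommGroup G] [Fintype G] (f : G →+ ZMod 2) (y : G)
    (hy : f y ≠ 0) : ∑ x, e (f x) = 0 := by
  have h : ∑ x, e (f (x + y)) = ∑ x, e (f x) :=
    Equiv.sum_comp (Equiv.addRight y) fun x => e (f x)
  simp only [map_add, e_add, e_of_ne _ hy, mul_neg, mul_one, sum_neg_distrib] at h
  linarith

variable {F : Type*} [Field F]

lemma two_eq_zero [Algebra (ZMod 2) F] : (2 : F) = 0 := by
  have h := map_ofNat (algebraMap (ZMod 2) F) 2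
  rw [← h, show (OfNat.ofNat 2 : ZMod 2) = 0 from rfl, map_zero]

/-- Cauchy's theorem in the multiplicative group yields a primitive cube root of unity. -/
lemma exists_omega [Fintype F] {k : ℕ} (hcard : Fintype.card F = 2 ^ (2 * k)) :
    ∃ w : F, w ^ 2 + w + 1 = 0 := by
  classical
  have h3 : 3 ∣ Fintype.card Fˣ := by
    rw [Fintype.card_units, hcard, pow_mul]
    simpa using Nat.sub_dvd_pow_sub_pow 4 1 k
  obtain ⟨g, hg⟩ := exists_prime_orderOf_dvd_card 3 h3
  have h1 : (g : F) ≠ 1 := by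
    intro h
    rw [Units.val_eq_one.mp h, orderOf_one] at hg
    omega
  have hp : (g : F) ^ 3 = 1 := by
    rw [← Units.val_pow_eq_pow_val, ← hg, pow_orderOf_eq_one, Units.val_one]
  refine ⟨g, mul_left_cancel₀ (sub_ne_zero.mpr h1) ?_⟩
  linear_combination hp

lemma ne_one_of_omega [Algebra (ZMod 2) F] {w : F} (hw : w ^ 2 + w + 1 = 0) : w ≠ 1 := by
  rintro rfl
  exact one_ne_zero (α := F) (by linear_combination hw - two_eq_zero (F := F))

/-- The additive map `x ↦ Tr (x ^ 2 * u + x * u ^ 2)`, the polarization of `x ↦ Tr (x ^ 3)`. -/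
noncomputable def polar [Algebra (ZMod 2) F] (u : F) : F →+ ZMod 2 where
  toFun x := Algebra.trace (ZMod 2) F (x ^ 2 * u + x * u ^ 2)
  map_zero' := by simp
  map_add' x y := by
    rw [← map_add]
    congr 1
    linear_combination x * y * u * two_eq_zero (F := F)

lemma polar_apply [Algebra (ZMod 2) F] (u x : F) :
    polar u x = Algebra.trace (ZMod 2) F (x ^ 2 * u + x * u ^ 2) := rfl

variable [Fintype F] [Algebra (ZMod 2) F]

lemma trace_sq (x : F) : Algebra.trace (ZMod 2) F (x ^ 2) = Algebra.trace (ZMod 2) F x := by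
  have h := Algebra.trace_eq_of_algEquiv
    (FiniteField.frobeniusAlgEquivOfAlgebraic (ZMod 2) F) x
  simpa using h

lemma polar_eq (u x : F) : polar u x = Algebra.trace (ZMod 2) F ((u + u ^ 4) * x ^ 2) := by
  rw [polar_apply, map_add, ← trace_sq (x * u ^ 2), ← map_add]
  congr 1
  ring

lemma polar_of_pow_four {u : F} (hu : u ^ 4 = u) (x : F) : polar u x = 0 := by
  have h : u + u ^ 4 = 0 := by linear_combination hu + u * two_eq_zero (F := F)
  rw [polar_eq, h, zero_mul, map_zero]

lemma exists_polar_ne {u : F} (hu : u ^ 4 ≠ u) : ∃ x, polar u x ≠ 0 := by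
  have h : u + u ^ 4 ≠ 0 := fun h => hu (by linear_combination h - u * two_eq_zero (F := F))
  by_contra! hall
  refine h ((traceForm_nondegenerate (ZMod 2) F).1 _ fun y => ?_)
  -- Every element of a finite field of characteristic two is a square.
  obtain ⟨x, rfl⟩ := (FiniteField.frobeniusAlgEquivOfAlgebraic (ZMod 2) F).surjective y
  rw [Algebra.traceForm_apply, FiniteField.coe_frobeniusAlgEquivOfAlgebraic, ZMod.card]
  exact (polar_eq u x).symm.trans (hall x)

lemma sum_polar (u : F) [Decidable (u ^ 4 = u)] :
    ∑ x, e (polar u x) = if u ^ 4 = u then (Fintype.card F : ℤ) else 0 := by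
  split_ifs with hu
  · simp [polar_of_pow_four hu, e_zero]
  · obtain ⟨y, hy⟩ := exists_polar_ne hu
    exact sum_e_eq_zero _ y hy

/-- The solutions of `u ^ 4 = u` form the subfield `{0, 1, w, w + 1}`. -/
lemma card_pow_four [DecidableEq F] {w : F} (hw : w ^ 2 + w + 1 = 0) :
    #{u : F | u ^ 4 = u} = 4 := by
  have h2 := two_eq_zero (F := F)
  have hw1 := ne_one_of_omega hw
  have hw0 : w ≠ 0 := by rintro rfl; simp at hw
  have hset : ({u : F | u ^ 4 = u} : Finset F) = {0, 1, w, w + 1} := by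
    ext u
    simp only [mem_filter, mem_univ, true_and, mem_insert, mem_singleton]
    constructor
    · intro hu
      have h : u * ((u - 1) * ((u - w) * (u - (w + 1)))) = 0 := by
        linear_combination hu + (u ^ 2 - u) * hw - (u ^ 3 * w + u ^ 3 - u ^ 2 * w) * h2
          + u * h2
      simpa [sub_eq_zero] using h
    · have h4 : w ^ 4 = w := by linear_combination (w ^ 2 - w) * hw
      rintro (rfl | rfl | rfl | rfl)
      · simp
      · simp
      · exact h4
      · linear_combination h4 + (2 * w ^ 3 + 3 * w ^ 2 + 2 * w) * h2
  have hw' : w + 1 ≠ 0 := fun h => hw1 (by linear_combination h - h2)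
  rw [hset, card_insert_of_notMem, card_insert_of_notMem, card_insert_of_notMem, card_singleton]
  · simp
  · simp [hw1.symm, hw0]
  · simp [hw0.symm, hw'.symm]

/-- The degree of `F` over `ZMod 2` is even, so the trace of `1` vanishes. -/
lemma trace_one {k : ℕ} (hcard : Fintype.card F = 2 ^ (2 * k)) :
    Algebra.trace (ZMod 2) F 1 = 0 := by
  have h := Module.card_eq_pow_finrank (K := ZMod 2) (V := F)
  rw [hcard, ZMod.card] at h
  have h' := Nat.pow_right_injective le_rfl h
  have := Algebra.trace_algebraMap (R := ZMod 2) (S := F) 1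
  rw [map_one, ← h'] at this
  rw [this, mul_smul, two_smul]
  exact CharTwo.add_self_eq_zero _

lemma sq_sum_cube {k : ℕ} (hcard : Fintype.card F = 2 ^ (2 * k)) :
    (∑ x : F, e (Algebra.trace (ZMod 2) F (x ^ 3))) ^ 2 = 4 * 2 ^ (2 * k) := by
  classical
  obtain ⟨w, hw⟩ := exists_omega hcard
  have h2 := two_eq_zero (F := F)
  -- The polarization identity: `x ^ 3 + (x + u) ^ 3 = (x ^ 2 * u + x * u ^ 2) + u ^ 3`.
  have key (x u : F) : e (Algebra.trace (ZMod 2) F (x ^ 3)) *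
      e (Algebra.trace (ZMod 2) F ((x + u) ^ 3)) =
      e (polar u x) * e (Algebra.trace (ZMod 2) F (u ^ 3)) := by
    rw [polar_apply, ← e_add, ← e_add, ← map_add, ← map_add]
    congr 2
    linear_combination (x ^ 3 + x ^ 2 * u + x * u ^ 2) * h2
  have htr (u : F) (hu : u ^ 4 = u) : Algebra.trace (ZMod 2) F (u ^ 3) = 0 := by
    have h : u * (u ^ 3 - 1) = 0 := by linear_combination hu
    rcases mul_eq_zero.mp h with rfl | h
    · simp
    · rw [sub_eq_zero.mp h, trace_one hcard]
  calc (∑ x : F, e (Algebra.trace (ZMod 2) F (x ^ 3))) ^ 2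
      = ∑ x : F, ∑ u : F, e (Algebra.trace (ZMod 2) F (x ^ 3)) *
          e (Algebra.trace (ZMod 2) F ((x + u) ^ 3)) := by
        rw [sq, sum_mul]
        refine sum_congr rfl fun x _ => ?_
        rw [← mul_sum]
        congr 1
        exact (Equiv.sum_comp (Equiv.addLeft x)
          fun y => e (Algebra.trace (ZMod 2) F (y ^ 3))).symm
    _ = ∑ u : F, (∑ x : F, e (polar u x)) * e (Algebra.trace (ZMod 2) F (u ^ 3)) := by
        rw [sum_comm]
        simp only [key, sum_mul]
    _ = ∑ u : F, if u ^ 4 = u then (Fintype.card F : ℤ) else 0 := by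
        refine sum_congr rfl fun u _ => ?_
        rw [sum_polar]
        split_ifs with hu
        · rw [htr u hu, e_zero, mul_one]
        · rw [zero_mul]
    _ = 4 * 2 ^ (2 * k) := by
        rw [← sum_filter, sum_const, card_pow_four hw, hcard]
        simp

/-- Multiplication by a primitive cube root of unity acts on the set without fixed points. -/
lemma three_dvd_card {w : F} (hw : w ^ 2 + w + 1 = 0) :
    3 ∣ {u : F | Algebra.trace (ZMod 2) F (u ^ 3) = 1}.ncard := by
  classical
  have hw3 : w ^ 3 = 1 := by linear_combination (w - 1) * hw
  let f : Function.End {u : F // Algebra.trace (ZMod 2) F (u ^ 3) = 1} :=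
    fun u => ⟨w * u, by rw [mul_pow, hw3, one_mul, u.2]⟩
  have hf : f ^ 3 ^ 1 = 1 := by
    funext u
    apply Subtype.ext
    change w * (w * (w * (u : F))) = u
    linear_combination (u : F) * hw3
  have h := Equiv.Perm.card_fixedPoints_modEq (p := 3) hf
  have hempty : IsEmpty f.fixedPoints := by
    refine ⟨fun u => ?_⟩
    have hu : w * (u.1.1 : F) = u.1.1 := congrArg Subtype.val u.2
    have h0 : (w - 1) * u.1.1 = 0 := by linear_combination hu
    rcases mul_eq_zero.mp h0 with h0 | h0
    · exact ne_one_of_omega hw (sub_eq_zero.mp h0)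
    · have := u.1.2
      simp [h0] at this
  rw [Fintype.card_eq_zero (α := f.fixedPoints)] at h
  rw [← Nat.card_coe_set_eq, Nat.card_eq_fintype_card]
  exact (Nat.modEq_zero_iff_dvd.mp h)

lemma sum_cube_eq :
    ∑ x : F, e (Algebra.trace (ZMod 2) F (x ^ 3)) =
      Fintype.card F - 2 * ({u : F | Algebra.trace (ZMod 2) F (u ^ 3) = 1}.ncard : ℤ) := by
  classical
  simp only [e_eq, sum_sub_distrib, ← mul_sum, sum_boole]
  rw [Set.ncard_eq_toFinset_card']
  simp

end TraceCube

open TraceCube in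
/-- For `q = 2^m`, `m ≥ 4` even, the set `B = {u ∈ GF(q) : Tr(u³) = 1}` has
cardinality `2^{m-1} + (-2)^{m/2}`, where `Tr` is the absolute trace map
`GF(2^m) → GF(2)`. -/
theorem card_trace_cube_eq_one (F : Type*) [Field F] [Fintype F] [Algebra (ZMod 2) F]
    (m : ℕ) (hm : 4 ≤ m) (heven : Even m) (hcard : Fintype.card F = 2 ^ m) :
    ({u : F | Algebra.trace (ZMod 2) F (u ^ 3) = 1}.ncard : ℤ)
      = 2 ^ (m - 1) + (-2) ^ (m / 2) := by
  obtain ⟨k, rfl⟩ := even_iff_exists_two_mul.mp heven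
  obtain ⟨w, hw⟩ := exists_omega hcard
  have hsq := sq_sum_cube hcard
  have h3 := three_dvd_card hw
  rw [sum_cube_eq, hcard] at hsq
  generalize {u : F | Algebra.trace (ZMod 2) F (u ^ 3) = 1}.ncard = N at *
  rw [Nat.mul_div_cancel_left k two_pos]
  have hq : (2 : ℤ) ^ (2 * k) = 2 * 2 ^ (2 * k - 1) := by
    rw [← pow_succ', Nat.sub_add_cancel (by omega)]
  have hk : (2 : ℤ) ^ (2 * k) = ((-2) ^ k) ^ 2 := by
    rw [← pow_mul, mul_comm k 2, pow_mul, pow_mul]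
    norm_num
  -- Every power of `-2` is `1` modulo `3`; this selects the sign of the square root.
  have hmod : (3 : ℤ) ∣ (-2) ^ k - 1 := by
    simpa using (show (3 : ℤ) ∣ -2 - 1 by norm_num).trans (sub_dvd_pow_sub_pow (-2 : ℤ) 1 k)
  push_cast at hsq
  have hfac : ((2 : ℤ) ^ (2 * k) - 2 * N - 2 * (-2) ^ k) *
      ((2 : ℤ) ^ (2 * k) - 2 * N + 2 * (-2) ^ k) = 0 := by
    linear_combination hsq + 4 * hk
  rcases mul_eq_zero.mp hfac with h | h
  · exfalso
    have hmod2 : (3 : ℤ) ∣ 2 ^ (2 * k) - 1 := by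
      rw [hk]
      exact hmod.trans ⟨(-2) ^ k + 1, by ring⟩
    omega
  · linarith
end

section
/- Let q = 2^m where m ≥ 4 is even, let Tr denote the absolute trace map from GF(2^m) to GF(2), and let ω ∈ GF(q) be a primitive 3rd root of unity. Let B = {u ∈ GF(q) : Tr(u³) = 1}. Then the setwise stabiliser of B in GA_1(q) equals the 12-element group {x ↦ ω^k·x + δ·ω^j : k, j ∈ {0, 1, 2}, δ ∈ {0, 1}}; that is, a permutation x ↦ a·x + b with a ≠ 0 maps B onto B if and only if a ∈ {1, ω, ω²} and b ∈ {0, 1, ω, ω²}. -/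
/-!
In characteristic two, `(a x + b)³ = a³ x³ + a² b x² + a b² x + b³`, and `Tr z = Tr z²`. The map
`x ↦ a x + b` is a bijection and `Tr` takes only the values `0` and `1`, so it stabilises `B` iff
`Tr ((a x + b)³) = Tr (x³)` for all `x`.

Put `c = a³ + 1`. Polarising this identity gives `Tr (c (x² y + x y²)) = 0`, that is
`Tr ((c² x⁴ + c x) y²) = 0` for all `x, y`. The trace form is nondegenerate and squaring is
bijective, so `c² x⁴ + c x = 0` for all `x`. If `c ≠ 0`, then `x = 1` gives `c = 1`, so `x⁴ = x` on
all of the field, which has more than four elements. Hence `a³ = 1`, and the identity reduces to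
`Tr (a² (b + b⁴) x²) = 0` up to a constant, which forces `b⁴ = b`.
Conversely, these conditions make the linear and quadratic terms cancel, and `Tr (b³) = 0` because
`Tr 1 = m` is even.
-/

lemma charTwo_of_zmodTwo_algebra (F : Type*) [Field F] [Algebra (ZMod 2) F] : CharP F 2 :=
  charP_of_injective_algebraMap (algebraMap (ZMod 2) F).injective 2

lemma trace_sq (F : Type*) [Field F] [Fintype F] [Algebra (ZMod 2) F] (x : F) :
    Algebra.trace (ZMod 2) F (x ^ 2) = Algebra.trace (ZMod 2) F x := by
  have h := Algebra.trace_eq_of_algEquiv (FiniteField.frobeniusAlgEquivOfAlgebraic (ZMod 2) F) x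
  simpa [ZMod.card] using h

/-- Nondegeneracy of the trace form, tested on squares only; squaring is bijective. -/
lemma eq_zero_of_trace_mul_sq (F : Type*) [Field F] [Fintype F] [Algebra (ZMod 2) F] (c : F)
    (h : ∀ x : F, Algebra.trace (ZMod 2) F (c * x ^ 2) = 0) : c = 0 := by
  refine (traceForm_nondegenerate (ZMod 2) F).1 c fun y => ?_
  obtain ⟨x, rfl⟩ := (FiniteField.frobeniusAlgEquivOfAlgebraic (ZMod 2) F).surjective y
  simpa [Algebra.traceForm_apply, FiniteField.coe_frobeniusAlgEquivOfAlgebraic, ZMod.card] using h x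

lemma mem_of_cube_eq_one {F : Type*} [Field F] {ω : F} (hω3 : ω ^ 3 = 1) (hω1 : ω ≠ 1) {b : F}
    (hb : b ^ 3 = 1) : b ∈ ({1, ω, ω ^ 2} : Set F) := by
  have hs : 1 + ω + ω ^ 2 = 0 := by
    have : (ω - 1) * (1 + ω + ω ^ 2) = 0 := by linear_combination hω3
    exact (mul_eq_zero.mp this).resolve_left (sub_ne_zero.mpr hω1)
  have h : (b - 1) * ((b - ω) * (b - ω ^ 2)) = 0 := by
    linear_combination hb - hω3 * (1 - b) + (-b ^ 2 + b * ω) * hs + b * (1 - ω) * hs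
  simpa [sub_eq_zero] using h

/-- The affine stabiliser condition as a pointwise identity: a bijection preserves the set where a
`ZMod 2`-valued function is `1` iff it preserves the function. -/
lemma image_eq_iff_trace (F : Type*) [Field F] [Fintype F] [Algebra (ZMod 2) F] (a b : F)
    (ha : a ≠ 0) :
    (fun x => a * x + b) '' {u : F | Algebra.trace (ZMod 2) F (u ^ 3) = 1} =
        {u : F | Algebra.trace (ZMod 2) F (u ^ 3) = 1} ↔
      ∀ x : F, Algebra.trace (ZMod 2) F ((a * x + b) ^ 3) = Algebra.trace (ZMod 2) F (x ^ 3) := by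
  have hinj : Function.Injective (fun x : F => a * x + b) := fun x y h => by
    simpa [ha] using h
  have hsurj : Function.Surjective (fun x : F => a * x + b) := Finite.surjective_of_injective hinj
  have key : ∀ u v : ZMod 2, (u = 1 ↔ v = 1) ↔ u = v := by decide
  rw [← Set.preimage_eq_preimage hsurj, Set.preimage_image_eq _ hinj, Set.ext_iff]
  refine forall_congr' fun x => ?_
  rw [← key]
  exact iff_comm

/-- Expansion of `Tr ((a x + b)³)`, with the linear term `a b² x` moved into the quadratic one by
`Tr z = Tr z²`. -/
lemma trace_affine_cube (F : Type*) [Field F] [Fintype F] [Algebra (ZMod 2) F] (a b x : F) :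
    Algebra.trace (ZMod 2) F ((a * x + b) ^ 3) =
      Algebra.trace (ZMod 2) F (a ^ 3 * x ^ 3) +
        Algebra.trace (ZMod 2) F (a ^ 2 * (b + b ^ 4) * x ^ 2) +
        Algebra.trace (ZMod 2) F (b ^ 3) := by
  have := charTwo_of_zmodTwo_algebra F
  have h2 : (2 : F) = 0 := CharTwo.two_eq_zero
  have e : (a * x + b) ^ 3 = a ^ 3 * x ^ 3 + a ^ 2 * b * x ^ 2 + a * b ^ 2 * x + b ^ 3 := by
    linear_combination (a ^ 2 * b * x ^ 2 + a * b ^ 2 * x) * h2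
  have e' : a ^ 2 * (b + b ^ 4) * x ^ 2 = a ^ 2 * b * x ^ 2 + (a * b ^ 2 * x) ^ 2 := by ring
  rw [e, e']
  simp only [map_add, trace_sq]
  ring

/-- If `c² x⁴ + c x` vanishes identically on a field with more than four elements, then `c = 0`. -/
lemma eq_zero_of_forall_quartic {F : Type*} [Field F] [Fintype F] (h4 : 4 < Fintype.card F) {ω : F}
    (hω3 : ω ^ 3 = 1) (hω1 : ω ≠ 1) (c : F) (h : ∀ x : F, c ^ 2 * x ^ 4 - c * x = 0) : c = 0 := by
  classical
  by_contra hc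
  have hc1 : c = 1 := by
    have h1 : c * (c - 1) = 0 := by linear_combination h 1
    exact sub_eq_zero.mp ((mul_eq_zero.mp h1).resolve_left hc)
  subst hc1
  have hsub : (Finset.univ : Finset F) ⊆ {0, 1, ω, ω ^ 2} := fun x _ => by
    by_cases hx : x = 0
    · simp [hx]
    · have hx3 : x * (x ^ 3 - 1) = 0 := by linear_combination h x
      have := mem_of_cube_eq_one hω3 hω1
        (sub_eq_zero.mp ((mul_eq_zero.mp hx3).resolve_left hx))
      simp only [Set.mem_insert_iff, Set.mem_singleton_iff] at this
      simp [this]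
  have := (Finset.card_le_card hsub).trans Finset.card_le_four
  rw [Finset.card_univ] at this
  omega

lemma trace_one_eq_zero (F : Type*) [Field F] [Fintype F] [Algebra (ZMod 2) F] (m : ℕ)
    (heven : Even m) (hcard : Fintype.card F = 2 ^ m) : Algebra.trace (ZMod 2) F 1 = 0 := by
  have h := Module.card_eq_pow_finrank (K := ZMod 2) (V := F)
  rw [hcard, ZMod.card] at h
  have hm := Nat.pow_right_injective le_rfl h
  have h1 := Algebra.trace_algebraMap (S := F) (1 : ZMod 2)
  rw [map_one, ← hm, nsmul_one] at h1
  rw [h1]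
  exact (ZMod.natCast_eq_zero_iff_even).mpr heven


/-- For `q = 2^m`, `m ≥ 4` even, `ω` a primitive 3rd root of unity in `GF(q)`
and `B = {u ∈ GF(q) : Tr(u³) = 1}`, the setwise stabiliser of `B` in `GA₁(q)`
is the 12-element group `{x ↦ ω^k·x + δ·ω^j : k, j ∈ {0,1,2}, δ ∈ {0,1}}`:
a map `x ↦ a·x + b` with `a ≠ 0` maps `B` onto `B` iff `a ∈ {1, ω, ω²}` and
`b ∈ {0, 1, ω, ω²}`. -/
theorem ga1_stabiliser_of_trace_cube_eq_one
    (F : Type*) [Field F] [Fintype F] [Algebra (ZMod 2) F]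
    (m : ℕ) (hm : 4 ≤ m) (heven : Even m) (hcard : Fintype.card F = 2 ^ m)
    (ω : F) (hω3 : ω ^ 3 = 1) (hω1 : ω ≠ 1)
    (B : Set F) (hB : B = {u : F | Algebra.trace (ZMod 2) F (u ^ 3) = 1})
    (a b : F) (ha : a ≠ 0) :
    (fun x => a * x + b) '' B = B ↔
      (a ∈ ({1, ω, ω ^ 2} : Set F) ∧ b ∈ ({0, 1, ω, ω ^ 2} : Set F)) := by
  subst hB
  rw [image_eq_iff_trace F a b ha]
  have := charTwo_of_zmodTwo_algebra F
  have h2 : (2 : F) = 0 := CharTwo.two_eq_zero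
  have h4 : 4 < Fintype.card F := by
    rw [hcard]
    calc 4 < 2 ^ 4 := by norm_num
      _ ≤ 2 ^ m := Nat.pow_le_pow_right (by norm_num) hm
  constructor
  · intro h
    have hb0 : Algebra.trace (ZMod 2) F (b ^ 3) = 0 := by simpa using h 0
    have h' : ∀ x : F, Algebra.trace (ZMod 2) F ((a ^ 3 - 1) * x ^ 3) +
        Algebra.trace (ZMod 2) F (a ^ 2 * (b + b ^ 4) * x ^ 2) = 0 := fun x => by
      have e := h x
      rw [trace_affine_cube, hb0] at e
      rw [sub_mul, one_mul, map_sub]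
      linear_combination e
    have hc : a ^ 3 - 1 = 0 := by
      refine eq_zero_of_forall_quartic h4 hω3 hω1 _ fun x => eq_zero_of_trace_mul_sq F _ fun y => ?_
      set c := a ^ 3 - 1 with hcdef
      set d := a ^ 2 * (b + b ^ 4) with hd
      -- polarisation of the cubic form `x ↦ Tr (c x³)`; the quadratic term is additive in `x`
      have e1 : c * (x + y) ^ 3 = c * x ^ 3 + c * y ^ 3 + c * x ^ 2 * y + c * x * y ^ 2 := by
        linear_combination (c * x ^ 2 * y + c * x * y ^ 2) * h2
      have e2 : d * (x + y) ^ 2 = d * x ^ 2 + d * y ^ 2 := by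
        linear_combination d * x * y * h2
      have e3 : (c ^ 2 * x ^ 4 - c * x) * y ^ 2 = (c * x ^ 2 * y) ^ 2 + c * x * y ^ 2 := by
        linear_combination -c * x * y ^ 2 * h2
      have hxy := h' (x + y)
      rw [e1, e2] at hxy
      rw [e3]
      simp only [map_add, trace_sq] at hxy ⊢
      linear_combination hxy - h' x - h' y
    have ha3 : a ^ 3 = 1 := sub_eq_zero.mp hc
    refine ⟨mem_of_cube_eq_one hω3 hω1 ha3, ?_⟩
    have hd : a ^ 2 * (b + b ^ 4) = 0 := eq_zero_of_trace_mul_sq F _ fun x => by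
      simpa [hc] using h' x
    have hbb : b + b ^ 4 = 0 := (mul_eq_zero.mp hd).resolve_left (pow_ne_zero 2 ha)
    have hb : b * (b ^ 3 - 1) = 0 := by linear_combination hbb - b * h2
    rcases mul_eq_zero.mp hb with hb | hb
    · exact Or.inl hb
    · exact Or.inr (mem_of_cube_eq_one hω3 hω1 (sub_eq_zero.mp hb))
  · rintro ⟨ha', hb'⟩ x
    have cube : ∀ z ∈ ({1, ω, ω ^ 2} : Set F), z ^ 3 = 1 := by
      rintro z (rfl | rfl | rfl)
      · exact one_pow 3
      · exact hω3
      · rw [← pow_mul, mul_comm, pow_mul, hω3, one_pow]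
    rw [trace_affine_cube, cube a ha', one_mul]
    rcases hb' with rfl | hb'
    · simp
    · have hb4 : b + b ^ 4 = 0 := by linear_combination b * cube b hb' + b * h2
      rw [hb4, cube b hb', trace_one_eq_zero F m heven hcard]
      simp
end

section
/- Let q = p^m be a prime power, let Tr denote the absolute trace map from GF(p^m) to GF(p), and for j ∈ GF(p) let B_j = {u ∈ GF(q) : Tr(u) = j}. Then the setwise stabiliser of B_j in GA_1(q) equals {x ↦ a·x + b : a ∈ GF(p)*, b ∈ GF(q), Tr(b) = j - j·a} (where GF(p) is identified with the prime subfield of GF(q)), and this stabiliser has exactly (p-1)·p^{m-1} elements. -/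
/-!
The fibre `B` over `j` is a coset of the hyperplane `ker Tr`, so if `x ↦ a * x + b` preserves `B`,
then multiplication by `a` preserves `ker Tr`. Hence `x ↦ Tr (a * x)` is a multiple `c * Tr x` of the
trace, and nondegeneracy of the trace form forces `a = c ∈ GF(p)`
(`eq_algebraMap_of_trace_mul_eq_zero`). Comparing traces on `B` gives `Tr b = j - j * c`; the converse
is a direct computation. For the count, each of the `p - 1` nonzero scalars `c` leaves a coset of
`ker Tr` for `b`, and `ker Tr` has `p ^ (m - 1)` elements.
-/

/-- If multiplication by `a` maps the kernel of the trace into itself, then `a` is a scalar. -/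
theorem eq_algebraMap_of_trace_mul_eq_zero {K F : Type*} [Field K] [Field F] [Algebra K F]
    {w : F} (hw : Algebra.trace K F w = 1) {a : F}
    (h : ∀ x, Algebra.trace K F x = 0 → Algebra.trace K F (a * x) = 0) :
    a = algebraMap K F (Algebra.trace K F (a * w)) := by
  set c := Algebra.trace K F (a * w) with hc
  -- Decompose `x` along `F = ker Tr ⊕ K • w`.
  have key : ∀ x, Algebra.trace K F (a * x) = Algebra.trace K F x * c := by
    intro x
    have h1 := h (x - Algebra.trace K F x • w) (by simp [hw])
    rw [mul_sub, mul_smul_comm, map_sub, map_smul, smul_eq_mul, sub_eq_zero] at h1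
    exact h1
  by_contra hne
  have hd : a - algebraMap K F c ≠ 0 := sub_ne_zero.mpr hne
  -- Nondegeneracy: otherwise `(a - c) * x` could be made equal to `w`, whose trace is `1`.
  have h2 := key ((a - algebraMap K F c)⁻¹ * w)
  have h3 : Algebra.trace K F ((a - algebraMap K F c) * ((a - algebraMap K F c)⁻¹ * w)) = 1 := by
    rw [mul_inv_cancel_left₀ hd, hw]
  rw [sub_mul, map_sub, h2, ← Algebra.smul_def, map_smul, smul_eq_mul, mul_comm, sub_self] at h3
  exact zero_ne_one h3

/-- The kernel of the trace has index `p`, because the trace is onto. -/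
theorem card_ker_trace {p m : ℕ} [Fact p.Prime] (hm : 0 < m)
    {F : Type*} [Field F] [Fintype F] [Algebra (ZMod p) F] (hcard : Fintype.card F = p ^ m)
    (hs : Function.Surjective (Algebra.trace (ZMod p) F)) :
    Nat.card (LinearMap.ker (Algebra.trace (ZMod p) F)) = p ^ (m - 1) := by
  have h := Submodule.card_eq_card_quotient_mul_card (LinearMap.ker (Algebra.trace (ZMod p) F))
  rw [Nat.card_congr (LinearMap.quotKerEquivOfSurjective _ hs).toEquiv, Nat.card_zmod,
    Nat.card_eq_fintype_card, hcard] at h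
  have hp : 0 < p := (Fact.out : p.Prime).pos
  obtain ⟨k, rfl⟩ : ∃ k, m = k + 1 := ⟨m - 1, by omega⟩
  rw [pow_succ'] at h
  rw [Nat.add_sub_cancel]
  exact (Nat.eq_of_mul_eq_mul_left hp (h.trans (mul_comm _ _))).symm


/-- For `q = p^m` and `j ∈ GF(p)`, the setwise stabiliser in `GA₁(q)` of
`B_j = {u ∈ GF(q) : Tr(u) = j}` equals
`{x ↦ a·x + b : a ∈ GF(p)*, Tr(b) = j - j·a}` (identifying `GF(p)` with the
prime subfield of `GF(q)`), and it has exactly `(p-1)·p^{m-1}` elements, where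
`Tr` is the absolute trace map `GF(p^m) → GF(p)`. -/
theorem ga1_stabiliser_of_trace_fiber
    (p m : ℕ) [Fact p.Prime] (hm : 0 < m)
    (F : Type*) [Field F] [Fintype F] [Algebra (ZMod p) F]
    (hcard : Fintype.card F = p ^ m)
    (j : ZMod p)
    (B : Set F) (hB : B = {u : F | Algebra.trace (ZMod p) F u = j}) :
    {pr : F × F | pr.1 ≠ 0 ∧ (fun x => pr.1 * x + pr.2) '' B = B}
      = {pr : F × F | ∃ a₀ : ZMod p, a₀ ≠ 0 ∧ pr.1 = algebraMap (ZMod p) F a₀ ∧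
          Algebra.trace (ZMod p) F pr.2 = j - j * a₀} ∧
    {pr : F × F | pr.1 ≠ 0 ∧ (fun x => pr.1 * x + pr.2) '' B = B}.ncard
      = (p - 1) * p ^ (m - 1) := by
  have hs : Function.Surjective (Algebra.trace (ZMod p) F) := Algebra.trace_surjective _ _
  obtain ⟨w, hw⟩ := hs 1
  have hset : {pr : F × F | pr.1 ≠ 0 ∧ (fun x => pr.1 * x + pr.2) '' B = B}
      = {pr : F × F | ∃ a₀ : ZMod p, a₀ ≠ 0 ∧ pr.1 = algebraMap (ZMod p) F a₀ ∧
          Algebra.trace (ZMod p) F pr.2 = j - j * a₀} := by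
    subst hB
    ext ⟨a, b⟩
    simp only [Set.mem_setOf_eq]
    constructor
    · rintro ⟨ha, hB⟩
      have hmap : ∀ u, Algebra.trace (ZMod p) F u = j →
          Algebra.trace (ZMod p) F (a * u) + Algebra.trace (ZMod p) F b = j := by
        intro u hu
        rw [← map_add]
        exact hB.subset ⟨u, hu, rfl⟩
      obtain ⟨u, hu⟩ := hs j
      have hker : ∀ x, Algebra.trace (ZMod p) F x = 0 →
          Algebra.trace (ZMod p) F (a * x) = 0 := by
        intro x hx
        have h1 := hmap u hu
        have h2 := hmap (u + x) (by rw [map_add, hu, hx, add_zero])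
        rw [mul_add, map_add] at h2
        linear_combination h2 - h1
      have hac := eq_algebraMap_of_trace_mul_eq_zero hw hker
      generalize Algebra.trace (ZMod p) F (a * w) = c at hac
      refine ⟨c, ?_, hac, ?_⟩
      · rintro rfl
        exact ha (by rw [hac, map_zero])
      · have h1 := hmap u hu
        rw [hac, ← Algebra.smul_def, map_smul, smul_eq_mul, hu] at h1
        linear_combination h1
    · rintro ⟨c, hc, rfl, hb⟩
      have hc' : algebraMap (ZMod p) F c ≠ 0 := by simpa using hc
      refine ⟨hc', ?_⟩
      ext y
      simp only [Set.mem_image, Set.mem_setOf_eq]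
      constructor
      · rintro ⟨x, hx, rfl⟩
        rw [map_add, ← Algebra.smul_def, map_smul, smul_eq_mul, hx, hb]
        ring
      · intro hy
        refine ⟨c⁻¹ • (y - b), ?_, ?_⟩
        · rw [map_smul, map_sub, hy, hb, smul_eq_mul]
          field_simp
          ring
        · rw [← Algebra.smul_def, smul_inv_smul₀ hc, sub_add_cancel]
  refine ⟨hset, ?_⟩
  rw [hset]
  -- Translating by `(j - j * c) • w` identifies `ker Tr` with the fibre over `j - j * c`.
  let f : ZMod p × F → F × F := fun z => (algebraMap (ZMod p) F z.1, z.2 + (j - j * z.1) • w)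
  have hf : Function.Injective f := by
    rintro ⟨c, k⟩ ⟨c', k'⟩ h
    simp only [f, Prod.mk.injEq] at h
    obtain rfl := (algebraMap (ZMod p) F).injective h.1
    simpa using h.2
  have himg : {pr : F × F | ∃ a₀ : ZMod p, a₀ ≠ 0 ∧ pr.1 = algebraMap (ZMod p) F a₀ ∧
      Algebra.trace (ZMod p) F pr.2 = j - j * a₀}
      = f '' ({0}ᶜ ×ˢ (LinearMap.ker (Algebra.trace (ZMod p) F) : Set F)) := by
    ext ⟨a, b⟩
    constructor
    · rintro ⟨c, hc, rfl, hb⟩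
      exact ⟨(c, b - (j - j * c) • w), ⟨hc, by simp [hw, hb]⟩, by simp [f]⟩
    · rintro ⟨⟨c, k⟩, ⟨hc, hk⟩, h⟩
      simp only [f, Prod.mk.injEq] at h
      refine ⟨c, hc, h.1.symm, ?_⟩
      have hk' : Algebra.trace (ZMod p) F k = 0 := hk
      simp [← h.2, hw, hk']
  have hcompl : ({0}ᶜ : Set (ZMod p)).ncard = p - 1 := by
    rw [Set.ncard_compl, Set.ncard_singleton, Nat.card_zmod]
  rw [himg, Set.ncard_image_of_injective _ hf, Set.ncard_prod, hcompl]
  congr 1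
  exact card_ker_trace hm hcard hs
end

section
/- Let q = p^m where p is a prime and m ≥ 3, let Tr denote the absolute trace map from GF(p^m) to GF(p), and let j ∈ GF(p). Let B = {u ∈ GF(q) : Tr(u) = j}. Then the orbit {π(B) : π ∈ GA_1(q)} is the block set of a 2-(p^m, p^{m-1}, (p^{m-1}-1)/(p-1)) design on GF(q). -/
/-!
The blocks are exactly the affine hyperplanes of `F` regarded as an affine space over `ZMod p`:
`a • B + b = {v | Tr (a⁻¹ (v - b)) = j}`, and the trace form is nondegenerate.  All trace fibres
are translates of each other, so each has `p ^ (m - 1)` points (`ncard_trace_fiber`).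

A block through `x` has the form `hyp p x c = {v | Tr (c (v - x)) = 0}` with `c ≠ 0`, and it
contains `y` iff `Tr (c (y - x)) = 0`.  There are `p ^ (m - 1) - 1` such nonzero `c`
(`card_normals`), and two of them give the same hyperplane iff they differ by a scalar in
`(ZMod p)ˣ` (`hyp_eq_iff`), so each block is counted `p - 1` times.
-/

section

variable {p m : ℕ} [Fact p.Prime] {F : Type*} [Field F] [Fintype F] [Algebra (ZMod p) F]

theorem trace_surj : Function.Surjective (Algebra.trace (ZMod p) F) :=
  Algebra.trace_surjective (ZMod p) F

theorem ncard_trace_fiber (hm : 1 ≤ m) (hcard : Fintype.card F = p ^ m) (k : ZMod p) :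
    {u : F | Algebra.trace (ZMod p) F u = k}.ncard = p ^ (m - 1) := by
  classical
  have key : ∀ l : ZMod p, (Finset.univ.filter
      fun u : F => Algebra.trace (ZMod p) F u = l).card =
      (Finset.univ.filter fun u : F => Algebra.trace (ZMod p) F u = k).card := by
    intro l
    obtain ⟨w, hw⟩ := trace_surj (F := F) (k - l)
    refine Finset.card_bij' (fun u _ => u + w) (fun u _ => u - w) ?_ ?_ ?_ ?_ <;>
      simp +contextual [hw]
  have h := Finset.card_eq_sum_card_fiberwise (s := (Finset.univ : Finset F))
    (t := (Finset.univ : Finset (ZMod p))) (f := Algebra.trace (ZMod p) F) (by simp)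
  rw [Finset.sum_congr rfl (fun l _ => key l), Finset.sum_const, Finset.card_univ,
    Finset.card_univ, ZMod.card, hcard, smul_eq_mul] at h
  rw [Set.ncard_eq_toFinset_card', Set.toFinset_setOf]
  obtain ⟨n, rfl⟩ : ∃ n, m = n + 1 := ⟨m - 1, by omega⟩
  rw [pow_succ'] at h
  exact (Nat.eq_of_mul_eq_mul_left (Fact.out : p.Prime).pos h).symm

/-- The affine hyperplane through `x` with normal vector `c` for the trace form. -/
def hyp (p : ℕ) {F : Type*} [Field F] [Algebra (ZMod p) F] (x c : F) : Set F :=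
  {v | Algebra.trace (ZMod p) F (c * (v - x)) = 0}

theorem eq_zero_of_trace_mul (c : F) (h : ∀ v, Algebra.trace (ZMod p) F (c * v) = 0) :
    c = 0 := by
  by_contra hc
  obtain ⟨u, hu⟩ := trace_surj (p := p) (F := F) 1
  have := h (c⁻¹ * u)
  rw [mul_inv_cancel_left₀ hc, hu] at this
  exact one_ne_zero this

theorem hyp_eq_iff (x : F) {c c' : F} (hc : c ≠ 0) (hc' : c' ≠ 0) :
    hyp p x c' = hyp p x c ↔ ∃ t : ZMod p, t ≠ 0 ∧ t • c = c' := by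
  constructor
  · intro h
    have h' : ∀ v, Algebra.trace (ZMod p) F (c * v) = 0 →
        Algebra.trace (ZMod p) F (c' * v) = 0 := by
      intro v hv
      have : v + x ∈ hyp p x c := by simpa [hyp] using hv
      rw [← h] at this
      simpa [hyp] using this
    -- The functional of `c'` is `t` times that of `c`, where `t` is its value at a point `u`
    -- at which the functional of `c` equals `1`.
    obtain ⟨u, hu⟩ : ∃ u, Algebra.trace (ZMod p) F (c * u) = 1 := by
      obtain ⟨u, hu⟩ := trace_surj (p := p) (F := F) 1
      exact ⟨c⁻¹ * u, by rw [mul_inv_cancel_left₀ hc, hu]⟩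
    have e : c' - Algebra.trace (ZMod p) F (c' * u) • c = 0 := by
      apply eq_zero_of_trace_mul (p := p)
      intro v
      have h1 := h' (v - Algebra.trace (ZMod p) F (c * v) • u)
        (by rw [mul_sub, mul_smul_comm, map_sub, map_smul, hu]; simp)
      rw [mul_sub, mul_smul_comm, map_sub, map_smul, smul_eq_mul] at h1
      rw [sub_mul, smul_mul_assoc, map_sub, map_smul, smul_eq_mul, mul_comm, ← h1, mul_comm]
      ring_nf
    refine ⟨_, ?_, (sub_eq_zero.mp e).symm⟩
    intro h0
    rw [h0, zero_smul, sub_zero] at e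
    exact hc' e
  · rintro ⟨t, ht, rfl⟩
    ext v
    simp [hyp, ht]

theorem card_normals [DecidableEq F] (hm : 1 ≤ m) (hcard : Fintype.card F = p ^ m) {d : F}
    (hd : d ≠ 0) :
    (Finset.univ.filter fun c : F => c ≠ 0 ∧ Algebra.trace (ZMod p) F (c * d) = 0).card
      = p ^ (m - 1) - 1 := by
  have h := ncard_trace_fiber (F := F) hm hcard 0
  rw [Set.ncard_eq_toFinset_card', Set.toFinset_setOf] at h
  rw [← h, ← Finset.card_erase_of_mem (a := (0 : F)) (by simp)]
  refine Finset.card_bij' (fun c _ => c * d) (fun u _ => u * d⁻¹) ?_ ?_ ?_ ?_ <;>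
    simp +contextual [hd]

/-- The image of a trace fibre under `u ↦ a * u + b`, if it contains `x`, is the hyperplane
through `x` with normal vector `a⁻¹`. -/
theorem image_eq_hyp {j : ZMod p} {a b x : F} (ha : a ≠ 0)
    (hx : Algebra.trace (ZMod p) F (a⁻¹ * (x - b)) = j) :
    (fun u => a * u + b) '' {u : F | Algebra.trace (ZMod p) F u = j} = hyp p x a⁻¹ := by
  ext v
  have e : a⁻¹ * (v - x) = a⁻¹ * (v - b) - a⁻¹ * (x - b) := by ring
  simp only [Set.mem_image, Set.mem_setOf_eq, hyp]
  rw [e, map_sub, hx, sub_eq_zero]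
  constructor
  · rintro ⟨u, hu, rfl⟩
    rwa [add_sub_cancel_right, inv_mul_cancel_left₀ ha]
  · intro h
    exact ⟨_, h, by rw [mul_inv_cancel_left₀ ha, sub_add_cancel]⟩

theorem blocks_eq_image [DecidableEq F] (j : ZMod p) (x y : F) :
    {C : Set F | (∃ a b : F, a ≠ 0 ∧
        C = (fun u => a * u + b) '' {u : F | Algebra.trace (ZMod p) F u = j}) ∧
        x ∈ C ∧ y ∈ C} =
      hyp p x '' {c : F | c ≠ 0 ∧ Algebra.trace (ZMod p) F (c * (y - x)) = 0} := by
  ext C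
  constructor
  · rintro ⟨⟨a, b, ha, rfl⟩, hx, hy⟩
    have hx' : Algebra.trace (ZMod p) F (a⁻¹ * (x - b)) = j := by
      obtain ⟨u, hu, rfl⟩ := hx
      simpa [ha] using hu
    rw [image_eq_hyp ha hx'] at hy ⊢
    exact ⟨a⁻¹, ⟨inv_ne_zero ha, hy⟩, rfl⟩
  · rintro ⟨c, ⟨hc, hy⟩, rfl⟩
    obtain ⟨u, hu⟩ := trace_surj (F := F) j
    refine ⟨⟨c⁻¹, x - c⁻¹ * u, inv_ne_zero hc, ?_⟩, by simp [hyp], hy⟩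
    rw [image_eq_hyp (x := x) (inv_ne_zero hc), inv_inv]
    rw [inv_inv, sub_sub_cancel, mul_inv_cancel_left₀ hc, hu]

theorem ncard_image_hyp (hm : 1 ≤ m) (hcard : Fintype.card F = p ^ m) {x y : F} (hxy : x ≠ y) :
    (hyp p x '' {c : F | c ≠ 0 ∧ Algebra.trace (ZMod p) F (c * (y - x)) = 0}).ncard
      = (p ^ (m - 1) - 1) / (p - 1) := by
  classical
  have hp := (Fact.out : p.Prime).two_le
  set S := Finset.univ.filter
    fun c : F => c ≠ 0 ∧ Algebra.trace (ZMod p) F (c * (y - x)) = 0 with hS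
  have hcoe : {c : F | c ≠ 0 ∧ Algebra.trace (ZMod p) F (c * (y - x)) = 0} = (S : Set F) := by
    simp [hS]
  rw [hcoe, ← Finset.coe_image, Set.ncard_coe_finset,
    ← card_normals hm hcard (sub_ne_zero.mpr hxy.symm), ← hS]
  refine (Nat.div_eq_of_eq_mul_left (by omega) ?_).symm
  rw [Finset.card_eq_sum_card_image (hyp p x) S]
  refine Finset.sum_const_nat ?_
  intro C hC
  obtain ⟨c, hcS, rfl⟩ := Finset.mem_image.mp hC
  obtain ⟨hc, hcd⟩ := (Finset.mem_filter.mp hcS).2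
  have hfib : S.filter (fun c' => hyp p x c' = hyp p x c) =
      (Finset.univ.erase (0 : ZMod p)).image (fun t => t • c) := by
    ext c'
    simp only [hS, Finset.mem_filter, Finset.mem_univ, true_and, Finset.mem_image,
      Finset.mem_erase, and_true]
    constructor
    · rintro ⟨⟨hc', -⟩, h⟩
      exact (hyp_eq_iff x hc hc').mp h
    · rintro ⟨t, ht, rfl⟩
      have hne : t • c ≠ 0 := smul_ne_zero ht hc
      exact ⟨⟨hne, by rw [smul_mul_assoc, map_smul, hcd, smul_zero]⟩,
        (hyp_eq_iff x hc hne).mpr ⟨t, ht, rfl⟩⟩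
  rw [hfib, Finset.card_image_of_injective _ (smul_left_injective _ hc),
    Finset.card_erase_of_mem (Finset.mem_univ _), Finset.card_univ, ZMod.card]

end


/-- For `q = p^m` with `p` prime, `m ≥ 3`, and `j ∈ GF(p)`, the orbit of
`B = {u ∈ GF(q) : Tr(u) = j}` under `GA₁(q)` is the block set of a
2-(p^m, p^{m-1}, (p^{m-1}-1)/(p-1)) design on `GF(q)`, where `Tr` is the
absolute trace map `GF(p^m) → GF(p)`. -/
theorem ga1_design_from_trace_fiber
    (p m : ℕ) [Fact p.Prime] (hm : 3 ≤ m)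
    (F : Type*) [Field F] [Fintype F] [Algebra (ZMod p) F]
    (hcard : Fintype.card F = p ^ m)
    (j : ZMod p)
    (B : Set F) (hB : B = {u : F | Algebra.trace (ZMod p) F u = j}) :
    (∀ C ∈ {C : Set F | ∃ a b : F, a ≠ 0 ∧ C = (fun x => a * x + b) '' B},
      C.ncard = p ^ (m - 1)) ∧
    (∀ x y : F, x ≠ y →
      {C : Set F | (∃ a b : F, a ≠ 0 ∧ C = (fun x => a * x + b) '' B) ∧
        x ∈ C ∧ y ∈ C}.ncard = (p ^ (m - 1) - 1) / (p - 1)) := by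
  subst hB
  refine ⟨?_, fun x y hxy => ?_⟩
  · rintro C ⟨a, b, ha, rfl⟩
    rw [Set.ncard_image_of_injective]
    · exact ncard_trace_fiber (by omega) hcard j
    · intro u v h
      simpa [ha] using h
  · classical
    rw [blocks_eq_image, ncard_image_hyp (by omega) hcard hxy]
end
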